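/- arXiv:2205.14531 — 7 statements merged into one kernel-verified Lean document; each statement's English description precedes it below -/
import Mathlib

section
/- Let n agents each have the same demand d with 0 < d ≤ S, let q = ⌊S/d⌋, and assume q ≤ n. Then there exists a feasible allocation X_1, …, X_n of the interval [0,T] such that λ(X_i) = (q/n)·T for every agent i (so each agent is connected exactly a q/n fraction of the time). -/
open MeasureTheory Set

/-! Cut `[0, T]` into `n` slots of equal length, indexed by the cyclic group `Fin n`, and fix a set
`A` of `q` residues. Agent `i` is connected during the slots `i + a` with `a ∈ A`: these are `q`
slots, and slot `k` serves exactly the `q` agents `k - a`, whose total demand is `q * d ≤ S`. -/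

section CyclicShare

variable {G α : Type*}

/-- The share of agent `i` in a round-robin schedule: given slots `P` indexed by a group `G` (in the
application `Fin n`, whose addition is modulo `n`) and a set `A` of offsets, agent `i` receives the
slots at offsets `a ∈ A` from `i`. -/
def cyclicShare [Add G] (P : G → Set α) (A : Finset G) (i : G) : Set α :=
  ⋃ a ∈ A, P (i + a)

lemma cyclicShare_subset [Add G] {P : G → Set α} {s : Set α} (hP : ∀ g, P g ⊆ s)
    (A : Finset G) (i : G) : cyclicShare P A i ⊆ s :=
  iUnion₂_subset fun a _ => hP (i + a)

lemma measurableSet_cyclicShare [Add G] [MeasurableSpace α] {P : G → Set α}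
    (hP : ∀ g, MeasurableSet (P g)) (A : Finset G) (i : G) : MeasurableSet (cyclicShare P A i) :=
  A.measurableSet_biUnion fun a _ => hP (i + a)

lemma measure_cyclicShare [Add G] [IsLeftCancelAdd G] [MeasurableSpace α] {μ : Measure α}
    {P : G → Set α} {c : ENNReal} (hdisj : Pairwise (Function.onFun Disjoint P))
    (hP : ∀ g, MeasurableSet (P g)) (hμ : ∀ g, μ (P g) = c) (A : Finset G) (i : G) :
    μ (cyclicShare P A i) = A.card * c := by
  have hdisj_add : Pairwise (Function.onFun Disjoint fun a => P (i + a)) :=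
    hdisj.comp_of_injective (add_right_injective i)
  rw [cyclicShare, measure_biUnion_finset (hdisj_add.set_pairwise _) fun a _ => hP (i + a)]
  simp [hμ]

lemma ncard_setOf_mem_cyclicShare_le [AddGroup G] {P : G → Set α}
    (hdisj : Pairwise (Function.onFun Disjoint P)) (A : Finset G) (t : α) :
    {i | t ∈ cyclicShare P A i}.ncard ≤ A.card := by
  by_cases ht : ∃ k, t ∈ P k
  · obtain ⟨k, hk⟩ := ht
    have hsub : {i | t ∈ cyclicShare P A i} ⊆ (fun a => k - a) '' A := by
      intro i hi
      obtain ⟨a, ha, hta⟩ := mem_iUnion₂.mp hi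
      have hik : i + a = k := hdisj.eq (not_disjoint_iff.mpr ⟨t, hta, hk⟩)
      exact ⟨a, ha, (eq_sub_of_add_eq hik).symm⟩
    calc {i | t ∈ cyclicShare P A i}.ncard
        ≤ ((fun a => k - a) '' (A : Set G)).ncard := ncard_le_ncard hsub (A.finite_toSet.image _)
      _ ≤ (A : Set G).ncard := ncard_image_le A.finite_toSet
      _ = A.card := ncard_coe_finset A
  · have hempty : {i | t ∈ cyclicShare P A i} = ∅ :=
      eq_empty_of_forall_notMem fun i hi =>
        let ⟨a, _, hta⟩ := mem_iUnion₂.mp hi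
        ht ⟨i + a, hta⟩
    simp [hempty]

end CyclicShare

lemma sum_indicator_const_eq_ncard_nsmul {ι α M : Type*} [Fintype ι] [AddCommMonoid M]
    (X : ι → Set α) (d : M) (t : α) :
    ∑ i, (X i).indicator (fun _ => d) t = {i | t ∈ X i}.ncard • d := by
  classical
  simp only [indicator_apply, ← Finset.sum_filter, Finset.sum_const, ncard_eq_toFinset_card',
    toFinset_ofPred]

/-- The `k`-th slot, counted from `0`, of the division of `[0, ∞)` into intervals of length `w`;
half-open, so that distinct slots are disjoint and not merely almost disjoint. -/
def timeSlot (w : ℝ) (k : ℕ) : Set ℝ :=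
  Ico (k * w) ((k + 1 : ℕ) * w)

lemma measurableSet_timeSlot (w : ℝ) (k : ℕ) : MeasurableSet (timeSlot w k) :=
  measurableSet_Ico

lemma volume_timeSlot (w : ℝ) (k : ℕ) : volume (timeSlot w k) = ENNReal.ofReal w := by
  rw [timeSlot, Real.volume_Ico]
  congr 1
  push_cast
  ring

lemma pairwise_disjoint_timeSlot {w : ℝ} (hw : 0 ≤ w) :
    Pairwise (Function.onFun Disjoint (timeSlot w)) :=
  (Nat.mono_cast.mul_const hw).pairwise_disjoint_on_Ico_succ

lemma timeSlot_subset_Icc {w : ℝ} (hw : 0 ≤ w) {k n : ℕ} (hk : k < n) :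
    timeSlot w k ⊆ Icc 0 (n * w) :=
  Ico_subset_Icc_self.trans <| Icc_subset_Icc (by positivity) <| by
    gcongr
    exact hk

theorem identical_demands_uniform_utilities_general {n q : ℕ} {d S T : ℝ}
    (hd : 0 ≤ d) (hT : 0 ≤ T) (hqS : q * d ≤ S) (hqn : q ≤ n) :
    ∃ X : Fin n → Set ℝ,
      (∀ i, MeasurableSet (X i)) ∧
      (∀ i, X i ⊆ Icc 0 T) ∧
      (∀ t ∈ Icc (0 : ℝ) T, ∑ i, (X i).indicator (fun _ => d) t ≤ S) ∧
      (∀ i, volume (X i) = ENNReal.ofReal ((q : ℝ) / (n : ℝ) * T)) := by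
  rcases eq_zero_or_neZero n with rfl | _
  · obtain rfl : q = 0 := Nat.le_zero.mp hqn
    exact ⟨finZeroElim, by simpa using fun _ _ _ => hqS⟩
  obtain ⟨A, -, rfl⟩ :=
    Finset.exists_subset_card_eq (s := (Finset.univ : Finset (Fin n))) (by simpa using hqn)
  have hw : 0 ≤ T / n := by positivity
  have hnw : n * (T / n) = T := mul_div_cancel₀ T (NeZero.ne (n : ℝ))
  let P : Fin n → Set ℝ := fun k => timeSlot (T / n) k
  have hP (k) : MeasurableSet (P k) := measurableSet_timeSlot _ k
  have hdisj : Pairwise (Function.onFun Disjoint P) :=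
    (pairwise_disjoint_timeSlot hw).comp_of_injective Fin.val_injective
  refine ⟨cyclicShare P A, measurableSet_cyclicShare hP A,
    cyclicShare_subset (fun k => hnw ▸ timeSlot_subset_Icc hw k.isLt) A, fun t _ => ?_, fun i => ?_⟩
  · calc ∑ i, (cyclicShare P A i).indicator (fun _ => d) t
        = {i | t ∈ cyclicShare P A i}.ncard * d := by
          rw [sum_indicator_const_eq_ncard_nsmul, nsmul_eq_mul]
      _ ≤ A.card * d := by gcongr; exact ncard_setOf_mem_cyclicShare_le hdisj A t
      _ ≤ S := hqS
  · calc volume (cyclicShare P A i)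
        = A.card * ENNReal.ofReal (T / n) :=
          measure_cyclicShare hdisj hP (fun k => volume_timeSlot _ k) A i
      _ = ENNReal.ofReal (A.card / n * T) := by
          rw [← ENNReal.ofReal_natCast, ← ENNReal.ofReal_mul (by positivity), div_mul_eq_mul_div,
            mul_div_assoc]

/-- Identical demands, uniform utilities: with `n` agents each of demand `d` (`0 < d ≤ S`)
and `q = ⌊S/d⌋ ≤ n`, there is a feasible allocation of `[0,T]` in which every agent is
connected exactly a `q/n` fraction of the time. -/
theorem identical_demands_uniform_utilities
    (n q : ℕ) (d S T : ℝ)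
    (hd : 0 < d) (hdS : d ≤ S) (hT : 0 < T)
    (hq : q = ⌊S / d⌋₊) (hqn : q ≤ n) :
    ∃ X : Fin n → Set ℝ,
      (∀ i, MeasurableSet (X i)) ∧
      (∀ i, X i ⊆ Set.Icc 0 T) ∧
      (∀ t ∈ Set.Icc (0 : ℝ) T, ∑ i, (X i).indicator (fun _ => d) t ≤ S) ∧
      (∀ i, volume (X i) = ENNReal.ofReal ((q : ℝ) / (n : ℝ) * T)) := by
  have hqS : q ≤ S / d := hq ▸ Nat.floor_le (div_nonneg (hd.le.trans hdS) hd.le)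
  exact identical_demands_uniform_utilities_general hd.le hT.le ((le_div_iff₀ hd).mp hqS) hqn
end

section
/- Let n agents each have the same demand d with 0 < d ≤ S, and let q = ⌊S/d⌋. Then every feasible allocation X_1, …, X_n of [0,T] satisfies min_i λ(X_i) ≤ (q/n)·T; that is, the egalitarian connection-time of any feasible allocation is at most a q/n fraction of the time. -/
open MeasureTheory Set

/-!
At almost every time at most `⌊S / d⌋` agents are connected. Integrating the number of connected
agents over time therefore bounds the total connection time by `⌊S / d⌋` times the length of the
interval, and some agent gets at most the average.
-/

open scoped Finset

section

variable {ι α : Type*} {X : ι → Set α} [∀ i, DecidablePred (· ∈ X i)] {s : Finset ι}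

theorem card_filter_mem_le_floor_div {K : Type*} [Semifield K] [LinearOrder K]
    [IsStrictOrderedRing K] [FloorSemiring K] {d S : K} {t : α} (hd : 0 < d)
    (hS : ∑ i ∈ s, (X i).indicator (fun _ ↦ d) t ≤ S) :
    #{i ∈ s | t ∈ X i} ≤ ⌊S / d⌋₊ := by
  refine Nat.le_floor ((le_div_iff₀ hd).mpr ?_)
  simpa [indicator_apply, ← Finset.sum_filter] using hS

variable [MeasurableSpace α] {μ : Measure α}

theorem sum_measure_eq_lintegral_card_filter_mem (hX : ∀ i ∈ s, NullMeasurableSet (X i) μ) :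
    ∑ i ∈ s, μ (X i) = ∫⁻ t, #{i ∈ s | t ∈ X i} ∂μ := calc
  ∑ i ∈ s, μ (X i) = ∑ i ∈ s, ∫⁻ t, (X i).indicator 1 t ∂μ :=
    Finset.sum_congr rfl fun i hi ↦ (lintegral_indicator_one₀ (hX i hi)).symm
  _ = ∫⁻ t, ∑ i ∈ s, (X i).indicator 1 t ∂μ :=
    (lintegral_finsetSum' s fun i hi ↦ aemeasurable_one.indicator₀ (hX i hi)).symm
  _ = ∫⁻ t, #{i ∈ s | t ∈ X i} ∂μ := by
    simp [indicator_apply]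

theorem sum_measure_le_of_card_filter_mem_le {q : ℕ} (hX : ∀ i ∈ s, NullMeasurableSet (X i) μ)
    (hq : ∀ᵐ t ∂μ, #{i ∈ s | t ∈ X i} ≤ q) :
    ∑ i ∈ s, μ (X i) ≤ q * μ univ := by
  rw [sum_measure_eq_lintegral_card_filter_mem hX, ← lintegral_const]
  exact lintegral_mono_ae (hq.mono fun _ ht ↦ Nat.cast_le.mpr ht)

theorem exists_measure_le_of_card_filter_mem_le {q : ℕ} (hs : s.Nonempty)
    (hX : ∀ i ∈ s, NullMeasurableSet (X i) μ)
    (hq : ∀ᵐ t ∂μ, #{i ∈ s | t ∈ X i} ≤ q) :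
    ∃ i ∈ s, μ (X i) ≤ q / #s * μ univ := by
  refine ENNReal.exists_le_of_sum_le hs ?_
  have hcard : (#s : ENNReal) ≠ 0 := Nat.cast_ne_zero.mpr hs.card_ne_zero
  calc
    ∑ i ∈ s, μ (X i) ≤ q * μ univ := sum_measure_le_of_card_filter_mem_le hX hq
    _ = ∑ _i ∈ s, q / #s * μ univ := by
      rw [Finset.sum_const, nsmul_eq_mul, ← mul_assoc,
        ENNReal.mul_div_cancel hcard (ENNReal.natCast_ne_top _)]

end

theorem identical_demands_egalitarian_upper_bound_general {ι α K : Type*} [Fintype ι] [Nonempty ι]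
    [MeasurableSpace α] {μ : Measure α} [Semifield K] [LinearOrder K] [IsStrictOrderedRing K]
    [FloorSemiring K] {d S : K} (hd : 0 < d) {X : ι → Set α}
    (hX : ∀ i, NullMeasurableSet (X i) μ)
    (hS : ∀ᵐ t ∂μ, ∑ i, (X i).indicator (fun _ ↦ d) t ≤ S) :
    ∃ i, μ (X i) ≤ ⌊S / d⌋₊ / Fintype.card ι * μ univ := by
  classical
  obtain ⟨i, -, hi⟩ := exists_measure_le_of_card_filter_mem_le Finset.univ_nonempty
    (fun i _ ↦ hX i) (hS.mono fun _ ↦ card_filter_mem_le_floor_div hd)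
  exact ⟨i, hi⟩

/-- Identical demands, uniform utilities, upper bound: with `n` agents each of demand `d`
(`0 < d ≤ S`) and `q = ⌊S/d⌋`, every feasible allocation of `[0,T]` gives some agent
connection time at most a `q/n` fraction of the time. -/
theorem identical_demands_egalitarian_upper_bound
    (n q : ℕ) (hn : 0 < n) (d S T : ℝ)
    (hd : 0 < d) (hdS : d ≤ S) (hT : 0 < T)
    (hq : q = ⌊S / d⌋₊)
    (X : Fin n → Set ℝ)
    (hmeas : ∀ i, MeasurableSet (X i))
    (hsub : ∀ i, X i ⊆ Set.Icc 0 T)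
    (hfeas : ∀ t ∈ Set.Icc (0 : ℝ) T, ∑ i, (X i).indicator (fun _ => d) t ≤ S) :
    ∃ i, volume (X i) ≤ ENNReal.ofReal ((q : ℝ) / (n : ℝ) * T) := by
  have : NeZero n := ⟨hn.ne'⟩
  obtain ⟨i, hi⟩ := identical_demands_egalitarian_upper_bound_general
    (μ := volume.restrict (Icc 0 T)) hd (fun i ↦ (hmeas i).nullMeasurableSet)
    (ae_restrict_of_forall_mem measurableSet_Icc hfeas)
  refine ⟨i, ?_⟩
  rw [ENNReal.ofReal_mul (by positivity), ENNReal.ofReal_div_of_pos (by positivity)]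
  simpa [Measure.restrict_eq_self volume (hsub i), hq] using hi
end

section
/- Let n agents each have the same demand d with 0 < d ≤ S, let q = ⌊S/d⌋, assume q ≤ n, and let μ_1, …, μ_n be nonatomic finite Borel measures on [0,T] (agent i's additive utility). Then there exists a feasible allocation X_1, …, X_n of [0,T] such that μ_i(X_i) ≥ (q/n)·μ_i([0,T]) for every agent i; that is, with identical demands and additive utilities one can guarantee every agent a q/n fraction of his total utility. -/
open MeasureTheory Set

/-!
Lay `q` copies of the time interval `(a, a + T]` end to end and let every agent value each copy by
his own measure, so that the whole cake `(a, a + qT]` is worth `q` times his total utility. Cut it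
with a moving knife: the agent whose share `q / n` is reached first takes the piece, which nobody
else values above his own share, so enough remains for the others. Folding the copies back onto
`(a, a + T]` puts at most `q` agents at each time, since two agents there must come from different
copies. An interval of length at most `T` folds without overlap and keeps its value; a longer one
covers all of `(a, a + T]`, which is worth enough because `q / n ≤ 1`.
-/

open scoped ENNReal Function

section CakeCutting

lemma exists_measure_Ioc_eq (ν : Measure ℝ) [NullSingletonClass ν] {a b : ℝ} (hab : a ≤ b)
    (hfin : ν (Ioc a b) ≠ ∞) {c : ℝ≥0∞} (hc : c ≤ ν (Ioc a b)) :
    ∃ x ∈ Icc a b, ν (Ioc a x) = c := by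
  have hcont : ContinuousOn (fun x ↦ ν.real (Ioc a x)) (Icc a b) := by
    have hint : IntegrableOn (fun _ ↦ (1 : ℝ)) (Icc a b) ν :=
      integrableOn_const (by rwa [measure_congr Ioc_ae_eq_Icc.symm])
    simpa using intervalIntegral.continuousOn_primitive hint
  have hmem : c.toReal ∈ Icc (ν.real (Ioc a a)) (ν.real (Ioc a b)) :=
    ⟨by simp, ENNReal.toReal_mono hfin hc⟩
  obtain ⟨x, hx, hxc⟩ := intermediate_value_Icc hab hcont hmem
  have hxfin : ν (Ioc a x) ≠ ∞ := measure_ne_top_of_subset (Ioc_subset_Ioc_right hx.2) hfin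
  exact ⟨x, hx, (ENNReal.toReal_eq_toReal_iff' hxfin (ne_top_of_le_ne_top hfin hc)).mp hxc⟩

lemma mul_le_measure_Ioc_of_succ_mul_le {ν : Measure ℝ} {a b x : ℝ} (hx : x ∈ Icc a b)
    {c : ℝ≥0∞} (hc : c ≠ ∞) {k : ℕ} (hk : (k + 1 : ℕ) * c ≤ ν (Ioc a b))
    (hcut : ν (Ioc a x) ≤ c) :
    k * c ≤ ν (Ioc x b) := by
  refine ENNReal.le_of_add_le_add_right hc ?_
  calc k * c + c = (k + 1 : ℕ) * c := by push_cast; ring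
    _ ≤ ν (Ioc a x ∪ Ioc x b) := by rwa [Ioc_union_Ioc_eq_Ioc hx.1 hx.2]
    _ ≤ ν (Ioc a x) + ν (Ioc x b) := measure_union_le _ _
    _ ≤ ν (Ioc x b) + c := by rw [add_comm]; gcongr

variable {ι : Type*} (ν : ι → Measure ℝ) [∀ i, NullSingletonClass (ν i)] {a b : ℝ} {c : ι → ℝ≥0∞}

lemma exists_first_cut {s : Finset ι} (hs : s.Nonempty) (hab : a ≤ b)
    (hfin : ∀ i ∈ s, ν i (Ioc a b) ≠ ∞) (hc : ∀ i ∈ s, c i ≤ ν i (Ioc a b)) :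
    ∃ i ∈ s, ∃ x ∈ Icc a b, ν i (Ioc a x) = c i ∧ ∀ j ∈ s, ν j (Ioc a x) ≤ c j := by
  choose! x hx hxc using fun i hi ↦ exists_measure_Ioc_eq (ν i) hab (hfin i hi) (hc i hi)
  obtain ⟨i, hi, hmin⟩ := s.exists_min_image x hs
  refine ⟨i, hi, x i, hx i hi, hxc i hi, fun j hj ↦ ?_⟩
  exact (measure_mono (Ioc_subset_Ioc_right (hmin j hj))).trans_eq (hxc j hj)

theorem exists_pairwiseDisjoint_Ioc_le_measure (s : Finset ι) (hab : a ≤ b)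
    (hfin : ∀ i ∈ s, ν i (Ioc a b) ≠ ∞) (hc : ∀ i ∈ s, s.card * c i ≤ ν i (Ioc a b)) :
    ∃ l r : ι → ℝ, (∀ i ∈ s, a ≤ l i ∧ r i ≤ b ∧ c i ≤ ν i (Ioc (l i) (r i))) ∧
      (s : Set ι).PairwiseDisjoint fun i ↦ Ioc (l i) (r i) := by
  classical
  induction hk : s.card generalizing s a with
  | zero =>
    obtain rfl := Finset.card_eq_zero.mp hk
    exact ⟨0, 0, by simp, by simp⟩
  | succ k ih =>
    rw [hk] at hc
    have hc_le : ∀ i ∈ s, c i ≤ ν i (Ioc a b) := fun i hi ↦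
      (le_mul_of_one_le_left' (by simp)).trans (hc i hi)
    obtain ⟨i, hi, x, hx, hxi, hcut⟩ :=
      exists_first_cut ν (Finset.card_pos.mp (by omega)) hab hfin hc_le
    have hcard : (s.erase i).card = k := by rw [Finset.card_erase_of_mem hi, hk, k.add_sub_cancel]
    obtain ⟨l, r, hlr, hdisj⟩ := ih (s.erase i) hx.2
      (fun j hj ↦ measure_ne_top_of_subset (Ioc_subset_Ioc_left hx.1)
        (hfin j (Finset.mem_of_mem_erase hj)))
      (fun j hj ↦ by
        have hjs := Finset.mem_of_mem_erase hj
        rw [hcard]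
        exact mul_le_measure_Ioc_of_succ_mul_le hx
          (ne_top_of_le_ne_top (hfin j hjs) (hc_le j hjs)) (hc j hjs) (hcut j hjs))
      hcard
    refine ⟨Function.update l i a, Function.update r i x, fun j hj ↦ ?_, ?_⟩
    · rcases eq_or_ne j i with rfl | hji
      · simpa using ⟨hx.2, hxi.ge⟩
      · obtain ⟨hl, hr⟩ := hlr j (Finset.mem_erase.mpr ⟨hji, hj⟩)
        simpa [hji] using ⟨hx.1.trans hl, hr⟩
    · rw [← Finset.insert_erase hi, Finset.coe_insert,
        pairwiseDisjoint_insert_of_notMem (by simp)]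
      refine ⟨fun j hj j' hj' hne ↦ ?_, fun j hj ↦ ?_⟩
      · simpa [Function.onFun, Finset.ne_of_mem_erase hj, Finset.ne_of_mem_erase hj']
          using hdisj hj hj' hne
      · simpa [Finset.ne_of_mem_erase hj] using Ioc_disjoint_Ioc_of_le (hlr j hj).1

end CakeCutting

section Stacking

/-- The utility of the cake `(a, a + qT]` made of `q` adjacent copies of the period `(a, a + T]`,
each copy being valued by `μ`. -/
noncomputable def stackedMeasure (μ : Measure ℝ) (a T : ℝ) (q : ℕ) : Measure ℝ :=
  Measure.sum fun k : Fin q ↦ (μ.restrict (Ioc a (a + T))).map (· + k * T)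

/-- The times of the period `(a, a + T]` at which at least one of the `q` copies of the period
meets the piece of cake `s`; this is the allocation that an agent holding `s` receives. -/
def foldedSet (a T : ℝ) (q : ℕ) (s : Set ℝ) : Set ℝ :=
  ⋃ k : Fin q, Ioc a (a + T) ∩ (· + k * T) ⁻¹' s

variable {a T l r : ℝ} {q : ℕ} {s : Set ℝ}

lemma mem_foldedSet {t : ℝ} :
    t ∈ foldedSet a T q s ↔ t ∈ Ioc a (a + T) ∧ ∃ k : Fin q, t + k * T ∈ s := by
  simp [foldedSet]

lemma foldedSet_subset : foldedSet a T q s ⊆ Ioc a (a + T) := fun _ ht ↦ (mem_foldedSet.mp ht).1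

lemma measurableSet_foldedSet (hs : MeasurableSet s) : MeasurableSet (foldedSet a T q s) :=
  .iUnion fun _ ↦ measurableSet_Ioc.inter (measurable_add_const _ hs)

lemma encard_setOf_mem_foldedSet_le {ι : Type*} {s : ι → Set ℝ}
    (hs : Pairwise (Disjoint on s)) (t : ℝ) :
    {i | t ∈ foldedSet a T q (s i)}.encard ≤ q := by
  choose copy hcopy using fun i : {i | t ∈ foldedSet a T q (s i)} ↦ (mem_foldedSet.mp i.2).2
  have hinj : Function.Injective copy := fun i j hij ↦ Subtype.ext <| by
    by_contra hne
    exact disjoint_left.mp (hs hne) (hcopy i) (hij ▸ hcopy j)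
  simpa using ENat.card_le_card_of_injective hinj

lemma stackedMeasure_apply (μ : Measure ℝ) (hs : MeasurableSet s) :
    stackedMeasure μ a T q s = ∑' k : Fin q, μ (Ioc a (a + T) ∩ (· + k * T) ⁻¹' s) := by
  rw [stackedMeasure, Measure.sum_apply _ hs]
  refine tsum_congr fun k ↦ ?_
  rw [Measure.map_apply (measurable_add_const _) hs,
    Measure.restrict_apply (measurable_add_const _ hs), inter_comm]

instance nullSingletonClass_stackedMeasure (μ : Measure ℝ) [NullSingletonClass μ] :
    NullSingletonClass (stackedMeasure μ a T q) where
  measure_singleton x := by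
    rw [stackedMeasure_apply μ (measurableSet_singleton x)]
    refine ENNReal.tsum_eq_zero.mpr fun k ↦ measure_mono_null inter_subset_right ?_
    exact ((subsingleton_singleton).preimage (add_left_injective _)).measure_zero μ

lemma stackedMeasure_Ioc (μ : Measure ℝ) (hT : 0 ≤ T) :
    stackedMeasure μ a T q (Ioc a (a + q * T)) = q * μ (Ioc a (a + T)) := by
  have hcopy (k : Fin q) : Ioc a (a + T) ⊆ (· + k * T) ⁻¹' Ioc a (a + q * T) := fun t ht ↦ by
    have hk : (k : ℝ) + 1 ≤ q := mod_cast k.isLt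
    have hkT : 0 ≤ k * T := by positivity
    constructor <;> nlinarith [ht.1, ht.2]
  simp only [stackedMeasure_apply μ measurableSet_Ioc, inter_eq_left.mpr (hcopy _)]
  simp

lemma measure_foldedSet_Ioc (μ : Measure ℝ) (hT : 0 ≤ T) (hlr : r ≤ l + T) :
    μ (foldedSet a T q (Ioc l r)) = stackedMeasure μ a T q (Ioc l r) := by
  rw [stackedMeasure_apply μ measurableSet_Ioc, foldedSet, measure_iUnion]
  · refine (pairwise_disjoint_on _).mpr fun k k' hkk' ↦ disjoint_left.mpr fun t ht ht' ↦ ?_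
    have hk : (k : ℝ) + 1 ≤ k' := mod_cast hkk'
    nlinarith [ht.2.1, ht'.2.2]
  · exact fun k ↦ measurableSet_Ioc.inter (measurable_add_const _ measurableSet_Ioc)

lemma foldedSet_Ioc_eq (hT : 0 < T) (hal : a ≤ l) (hrq : r ≤ a + q * T) (hlr : l + T ≤ r) :
    foldedSet a T q (Ioc l r) = Ioc a (a + T) := by
  refine foldedSet_subset.antisymm fun t ht ↦ mem_foldedSet.mpr ⟨ht, ?_⟩
  obtain ⟨m, ⟨hlm, hmr⟩, -⟩ := existsUnique_add_zsmul_mem_Ioc hT t l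
  rw [zsmul_eq_mul] at hlm hmr
  have hm_nonneg : 0 ≤ m := by
    have : (-1 : ℝ) < m := lt_of_mul_lt_mul_right (by linarith [ht.2]) hT.le
    exact_mod_cast this
  have hm_lt : m < q := by
    have : (m : ℝ) < q := lt_of_mul_lt_mul_right (by linarith [ht.1]) hT.le
    exact_mod_cast this
  lift m to ℕ using hm_nonneg
  exact ⟨⟨m, mod_cast hm_lt⟩, hlm, hmr.trans hlr⟩

lemma min_le_measure_foldedSet_Ioc (μ : Measure ℝ) (hT : 0 < T) (hal : a ≤ l)
    (hrq : r ≤ a + q * T) :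
    min (μ (Ioc a (a + T))) (stackedMeasure μ a T q (Ioc l r)) ≤
      μ (foldedSet a T q (Ioc l r)) := by
  rcases le_total r (l + T) with hlr | hlr
  · exact (min_le_right _ _).trans_eq (measure_foldedSet_Ioc μ hT.le hlr).symm
  · exact (min_le_left _ _).trans_eq (by rw [foldedSet_Ioc_eq hT hal hrq hlr])

end Stacking

lemma sum_indicator_const_le {ι α : Type*} [Fintype ι] {X : ι → Set α} {t : α} {q : ℕ}
    (hX : {i | t ∈ X i}.encard ≤ q) {d : ℝ} (hd : 0 ≤ d) :
    ∑ i, (X i).indicator (fun _ ↦ d) t ≤ q * d := by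
  classical
  have hcard : (Finset.univ.filter fun i ↦ t ∈ X i).card ≤ q := by
    rw [← Nat.cast_le (α := ℕ∞), ← encard_coe_eq_coe_finsetCard]
    simpa using hX
  calc ∑ i, (X i).indicator (fun _ ↦ d) t
      = (Finset.univ.filter fun i ↦ t ∈ X i).card * d := by
        simp only [indicator_apply, ← Finset.sum_filter, Finset.sum_const, nsmul_eq_mul]
    _ ≤ q * d := by gcongr

theorem identical_demands_additive_utilities_general {ι : Type*} [Fintype ι] {q : ℕ}
    {d S a T : ℝ} (hd : 0 < d) (hT : 0 < T) (hq : q ≤ S / d) (hqn : q ≤ Fintype.card ι)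
    (μ : ι → Measure ℝ) [∀ i, NullSingletonClass (μ i)] (hfin : ∀ i, μ i (Icc a (a + T)) ≠ ∞) :
    ∃ X : ι → Set ℝ,
      (∀ i, MeasurableSet (X i)) ∧
      (∀ i, X i ⊆ Icc a (a + T)) ∧
      (∀ t ∈ Icc a (a + T), ∑ i, (X i).indicator (fun _ ↦ d) t ≤ S) ∧
      (∀ i, ENNReal.ofReal (q / Fintype.card ι) * μ i (Icc a (a + T)) ≤ μ i (X i)) := by
  simp only [← measure_congr (Ioc_ae_eq_Icc (a := a) (b := a + T))] at hfin ⊢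
  set share : ℝ≥0∞ := ENNReal.ofReal (q / Fintype.card ι)
  have hshare_le : share ≤ 1 :=
    ENNReal.ofReal_le_one.mpr (div_le_one_of_le₀ (mod_cast hqn) (by positivity))
  have hcard_mul : Fintype.card ι * share ≤ q := by
    rw [← ENNReal.ofReal_natCast, ← ENNReal.ofReal_mul (by positivity), ← ENNReal.ofReal_natCast q,
      mul_div_left_comm]
    exact ENNReal.ofReal_le_ofReal (mul_le_of_le_one_right (by positivity) (div_self_le_one _))
  obtain ⟨l, r, hlr, hdisj⟩ := exists_pairwiseDisjoint_Ioc_le_measure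
    (c := fun i ↦ share * μ i (Ioc a (a + T))) (fun i ↦ stackedMeasure (μ i) a T q) Finset.univ
    (le_add_of_nonneg_right (by positivity : 0 ≤ q * T))
    (fun i _ ↦ by
      rw [stackedMeasure_Ioc _ hT.le]
      exact ENNReal.mul_ne_top (ENNReal.natCast_ne_top q) (hfin i))
    (fun i _ ↦ by
      rw [stackedMeasure_Ioc _ hT.le, Finset.card_univ, ← mul_assoc]
      gcongr)
  rw [Finset.coe_univ, PairwiseDisjoint, pairwise_univ] at hdisj
  refine ⟨fun i ↦ foldedSet a T q (Ioc (l i) (r i)),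
    fun i ↦ measurableSet_foldedSet measurableSet_Ioc,
    fun i ↦ foldedSet_subset.trans Ioc_subset_Icc_self, fun t _ ↦ ?_, fun i ↦ ?_⟩
  · exact (sum_indicator_const_le (encard_setOf_mem_foldedSet_le hdisj t) hd.le).trans
      ((le_div_iff₀ hd).mp hq)
  · obtain ⟨hal, hrb, hval⟩ := hlr i (Finset.mem_univ i)
    exact (le_min (mul_le_of_le_one_left' hshare_le) hval).trans
      (min_le_measure_foldedSet_Ioc (μ i) hT hal hrb)

/-- Identical demands, additive utilities: with `n` agents each of demand `d` (`0 < d ≤ S`),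
`q = ⌊S/d⌋ ≤ n`, and nonatomic finite Borel utility measures `μ i` on `[0,T]`, there is a
feasible allocation giving every agent at least a `q/n` fraction of his total utility. -/
theorem identical_demands_additive_utilities
    (n q : ℕ) (d S T : ℝ)
    (hd : 0 < d) (hdS : d ≤ S) (hT : 0 < T)
    (hq : q = ⌊S / d⌋₊) (hqn : q ≤ n)
    (μ : Fin n → Measure ℝ)
    (hfin : ∀ i, IsFiniteMeasure (μ i))
    (hatom : ∀ i, NoAtoms (μ i)) :
    ∃ X : Fin n → Set ℝ,
      (∀ i, MeasurableSet (X i)) ∧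
      (∀ i, X i ⊆ Set.Icc 0 T) ∧
      (∀ t ∈ Set.Icc (0 : ℝ) T, ∑ i, (X i).indicator (fun _ => d) t ≤ S) ∧
      (∀ i, ENNReal.ofReal ((q : ℝ) / (n : ℝ)) * μ i (Set.Icc 0 T) ≤ μ i (X i)) := by
  have hnull : ∀ i, NullSingletonClass (μ i) := hatom
  have hqS : (q : ℝ) ≤ S / d := hq ▸ Nat.floor_le (div_nonneg (hd.le.trans hdS) hd.le)
  simpa using identical_demands_additive_utilities_general (a := 0) hd hT hqS (by simpa) μ (by simp)
end

section
/- Let n agents have demands d_1, …, d_n > 0 and supply S > 0, and suppose there are subsets B_1, …, B_k of {1,…,n} with weights λ_1, …, λ_k ≥ 0 summing to 1 such that for each j the sum of d_i over i ∈ B_j is at most S, and for each agent i the total weight of the sets B_j containing i is at least r. Then for any nonatomic finite Borel measures u_1, …, u_n on [0,T], there exists a feasible allocation X_1, …, X_n of [0,T] such that u_i(X_i) ≥ r·u_i([0,T]) for every agent i. That is, the egalitarian guarantee r achievable for uniform utilities can also be guaranteed for arbitrary additive utilities. -/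
open MeasureTheory Set

/-!
The point is that finitely many atomless finite measures `uᵢ` can be made uniform *simultaneously*:
there is one measurable `U : Ω → [0,1]` whose law under each `uᵢ` is a multiple of Lebesgue measure.
A function of `U` whose uniform law gives weight `λⱼ` to the bin `Bⱼ` then cuts every `uᵢ` in the
proportions `λⱼ`, and running bin `Bⱼ` on the `j`-th piece transfers the uniform guarantee verbatim.

`U` exists as soon as all the measures can be halved at once on every set: halve repeatedly and read
off binary digits. Conversely, if `U` is uniform for the measures treated so far, the window
`{s < U ≤ s + 1/2}` halves all of them whatever `s` is, and as `s` goes from `0` to `1/2` the value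
of a further measure moves continuously from that of the window to that of its complement, so that
some `s` halves the new measure as well (Austin's moving knife). Alternating the two steps brings in
the measures one by one. The first to be treated is the sum `∑ uᵢ`: it dominates every `uᵢ`, so the
laws of the later measures under `U` have no atoms.
-/

open Filter Topology unitInterval

lemma nullSingletonClass_map_of_injective {α β : Type*} [MeasurableSpace α] [MeasurableSpace β]
    [MeasurableSingletonClass β] (μ : Measure α) [NullSingletonClass μ] {f : α → β}
    (hf : Measurable f) (hinj : Function.Injective f) : NullSingletonClass (μ.map f) where
  measure_singleton y := by
    rw [Measure.map_apply hf (measurableSet_singleton y)]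
    exact (subsingleton_singleton.preimage hinj).measure_zero μ

section HalfWindow

lemma continuous_measureReal_Ioc_add (ρ : Measure ℝ) [IsFiniteMeasure ρ] [NullSingletonClass ρ]
    {c : ℝ} (hc : 0 ≤ c) : Continuous fun s ↦ ρ.real (Ioc s (s + c)) := by
  have hint : Integrable (fun _ ↦ (1 : ℝ)) ρ := integrable_const 1
  have hF : Continuous fun b ↦ ∫ _ in (0 : ℝ)..b, (1 : ℝ) ∂ρ := hint.continuous_primitive 0
  have heq : (fun s ↦ ρ.real (Ioc s (s + c))) =
      fun s ↦ (∫ _ in (0 : ℝ)..s + c, (1 : ℝ) ∂ρ) - ∫ _ in (0 : ℝ)..s, (1 : ℝ) ∂ρ := by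
    ext s
    rw [intervalIntegral.integral_interval_sub_left hint.intervalIntegrable
      hint.intervalIntegrable, intervalIntegral.integral_of_le (by linarith)]
    simp
  rw [heq]
  exact (hF.comp (by fun_prop)).sub hF

/-- The half-open window of length `1/2` starting at `s`, as a subset of the unit interval. -/
def halfWindow (s : ℝ) : Set I := (↑) ⁻¹' Ioc s (s + 1 / 2)

lemma measurableSet_halfWindow (s : ℝ) : MeasurableSet (halfWindow s) :=
  measurable_subtype_coe measurableSet_Ioc

lemma volume_halfWindow {s : ℝ} (hs : s ∈ Icc (0 : ℝ) (1 / 2)) :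
    volume (halfWindow s) = 1 / 2 := by
  have hsub : Ioc s (s + 1 / 2) ⊆ I := fun x hx ↦
    ⟨hs.1.trans hx.1.le, hx.2.trans (by linarith [hs.2])⟩
  rw [halfWindow, measurePreserving_coe.measure_preimage measurableSet_Ioc.nullMeasurableSet,
    Measure.restrict_eq_self _ hsub, Real.volume_Ioc, add_sub_cancel_left,
    ENNReal.ofReal_div_of_pos two_pos, ENNReal.ofReal_one, ENNReal.ofReal_ofNat]

lemma halfWindow_zero_union_halfWindow_half : halfWindow 0 ∪ halfWindow (1 / 2) = {0}ᶜ := by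
  ext x
  have hx : x ≠ 0 ↔ (0 : ℝ) < x := unitInterval.pos_iff_ne_zero.symm
  have hx1 : (x : ℝ) ≤ 1 := x.2.2
  simp only [halfWindow, mem_union, mem_preimage, mem_Ioc, mem_compl_iff, mem_singleton_iff, hx]
  grind

lemma disjoint_halfWindow_zero_halfWindow_half : Disjoint (halfWindow 0) (halfWindow (1 / 2)) :=
  Disjoint.preimage _ (Ioc_disjoint_Ioc.2 (by norm_num))

lemma exists_measure_halfWindow_eq_half (ρ : Measure I) [IsFiniteMeasure ρ]
    [NullSingletonClass ρ] :
    ∃ s ∈ Icc (0 : ℝ) (1 / 2), ρ (halfWindow s) = ρ univ / 2 := by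
  have hmap (s : ℝ) : (ρ.map (↑)).real (Ioc s (s + 1 / 2)) = ρ.real (halfWindow s) :=
    map_measureReal_apply measurable_subtype_coe measurableSet_Ioc
  have : NullSingletonClass (ρ.map ((↑) : I → ℝ)) :=
    nullSingletonClass_map_of_injective ρ measurable_subtype_coe Subtype.val_injective
  have hcont : Continuous fun s ↦ ρ.real (halfWindow s) := by
    simpa only [hmap] using continuous_measureReal_Ioc_add (ρ.map (↑)) one_half_pos.le
  have hsum : ρ.real (halfWindow 0) + ρ.real (halfWindow (1 / 2)) = ρ.real univ := by
    rw [← measureReal_union disjoint_halfWindow_zero_halfWindow_half (measurableSet_halfWindow _),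
      halfWindow_zero_union_halfWindow_half, measureReal_compl (measurableSet_singleton 0),
      (measureReal_eq_zero_iff).2 (measure_singleton 0), sub_zero]
  have hmid : ρ.real univ / 2 ∈ uIcc (ρ.real (halfWindow 0)) (ρ.real (halfWindow (1 / 2))) := by
    rw [mem_uIcc]; grind
  obtain ⟨s, hs, hval⟩ := intermediate_value_uIcc hcont.continuousOn hmid
  rw [uIcc_of_le one_half_pos.le] at hs
  refine ⟨s, hs, ?_⟩
  rw [← ENNReal.toReal_eq_toReal_iff' (by finiteness) (by finiteness)]
  rwa [ENNReal.toReal_div, ENNReal.toReal_ofNat]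

end HalfWindow

section Bisection

variable {Ω : Type*}

open Classical in
/-- The integer whose `m` binary digits record the outcome for `x` of `m` successive bisections of
the space: each current piece `C` is cut into `h C` (digit `0`) and `C \ h C` (digit `1`). -/
noncomputable def bisectionIndex (h : Set Ω → Set Ω) : ℕ → Ω → ℕ
  | 0, _ => 0
  | m + 1, x => 2 * bisectionIndex h m x +
      if x ∈ h (bisectionIndex h m ⁻¹' {bisectionIndex h m x}) then 0 else 1

/-- The real number in `[0,1]` with the binary expansion produced by `bisectionIndex`. -/
noncomputable def bisectionPoint (h : Set Ω → Set Ω) (x : Ω) : ℝ :=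
  ⨆ m, (bisectionIndex h m x / 2 ^ m : ℝ)

lemma bisectionIndex_succ_preimage_even {h : Set Ω → Set Ω} (hsub : ∀ C, h C ⊆ C) (m j : ℕ) :
    bisectionIndex h (m + 1) ⁻¹' {2 * j} = h (bisectionIndex h m ⁻¹' {j}) := by
  ext x
  have hmem : x ∈ h (bisectionIndex h m ⁻¹' {j}) → bisectionIndex h m x = j := fun hx ↦ hsub _ hx
  simp only [mem_preimage, mem_singleton_iff, bisectionIndex]
  grind

lemma bisectionIndex_succ_preimage_odd (h : Set Ω → Set Ω) (m j : ℕ) :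
    bisectionIndex h (m + 1) ⁻¹' {2 * j + 1} =
      bisectionIndex h m ⁻¹' {j} \ h (bisectionIndex h m ⁻¹' {j}) := by
  ext x
  simp only [mem_preimage, mem_singleton_iff, Set.mem_sdiff, bisectionIndex]
  grind

lemma bisectionIndex_succ_mem_Icc (h : Set Ω → Set Ω) (m : ℕ) (x : Ω) :
    bisectionIndex h (m + 1) x ∈
      Icc (2 * bisectionIndex h m x) (2 * bisectionIndex h m x + 1) := by
  rw [mem_Icc, bisectionIndex]
  split_ifs <;> lia

lemma bisectionPoint_mem_Icc (h : Set Ω → Set Ω) (m : ℕ) (x : Ω) :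
    bisectionPoint h x ∈
      Icc (bisectionIndex h m x / 2 ^ m : ℝ) ((bisectionIndex h m x + 1) / 2 ^ m) := by
  refine mem_iInter.1 (Monotone.ciSup_mem_iInter_Icc_of_antitone
    (f := fun m ↦ (bisectionIndex h m x / 2 ^ m : ℝ))
    (g := fun m ↦ ((bisectionIndex h m x + 1) / 2 ^ m : ℝ))
    (monotone_nat_of_le_succ fun m ↦ ?_) (antitone_nat_of_succ_le fun m ↦ ?_) fun m ↦ ?_) m
  · have hle : (2 * bisectionIndex h m x : ℝ) ≤ bisectionIndex h (m + 1) x :=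
      mod_cast (bisectionIndex_succ_mem_Icc h m x).1
    rw [pow_succ', ← mul_div_mul_left (bisectionIndex h m x : ℝ) _ two_ne_zero]
    gcongr
  · have hle : (bisectionIndex h (m + 1) x : ℝ) ≤ 2 * bisectionIndex h m x + 1 :=
      mod_cast (bisectionIndex_succ_mem_Icc h m x).2
    rw [pow_succ', ← mul_div_mul_left (bisectionIndex h m x + 1 : ℝ) _ two_ne_zero]
    gcongr
    linarith
  · exact div_le_div_of_nonneg_right (le_add_of_nonneg_right zero_le_one) (by positivity)

lemma bisectionPoint_mem_unitInterval (h : Set Ω → Set Ω) (x : Ω) : bisectionPoint h x ∈ I := by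
  simpa [bisectionIndex] using bisectionPoint_mem_Icc h 0 x

lemma bisectionPoint_le_of_bisectionIndex_lt_floor (h : Set Ω → Set Ω) {t : ℝ} (ht : 0 ≤ t)
    {m : ℕ} {x : Ω} (hx : bisectionIndex h m x < ⌊t * 2 ^ m⌋₊) : bisectionPoint h x ≤ t := by
  have hle : ((bisectionIndex h m x + 1 : ℕ) : ℝ) ≤ t * 2 ^ m :=
    (Nat.le_floor_iff (by positivity)).1 hx
  push_cast at hle
  exact (bisectionPoint_mem_Icc h m x).2.trans ((div_le_iff₀ (by positivity)).2 hle)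

lemma bisectionIndex_le_floor_of_bisectionPoint_le (h : Set Ω → Set Ω) {t : ℝ} {x : Ω}
    (hx : bisectionPoint h x ≤ t) (m : ℕ) : bisectionIndex h m x ≤ ⌊t * 2 ^ m⌋₊ :=
  Nat.le_floor <| (div_le_iff₀ (by positivity)).1 <| (bisectionPoint_mem_Icc h m x).1.trans hx

end Bisection

section Halving

variable {Ω : Type*} [MeasurableSpace Ω]

/-- A family of measures is simultaneously halvable if every measurable set has a measurable subset
carrying exactly half of the mass that each measure of the family gives to the set. -/
def SimultaneouslyHalvable (L : Set (Measure Ω)) : Prop :=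
  ∀ A, MeasurableSet A → ∃ B ⊆ A, MeasurableSet B ∧ ∀ v ∈ L, v B = v A / 2

/-- A choice `h C ⊆ C` of simultaneous halves for the measures in `L`. Only the inclusion is asked
of non-measurable `C`. -/
structure IsHalvingMap (h : Set Ω → Set Ω) (L : Set (Measure Ω)) : Prop where
  subset (C : Set Ω) : h C ⊆ C
  measurableSet {C : Set Ω} (hC : MeasurableSet C) : MeasurableSet (h C)
  measure_eq {C : Set Ω} (hC : MeasurableSet C) {v : Measure Ω} (hv : v ∈ L) : v (h C) = v C / 2

namespace IsHalvingMap

variable {h : Set Ω → Set Ω} {L : Set (Measure Ω)} {v : Measure Ω}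

lemma measurable_bisectionIndex (hh : IsHalvingMap h L) (m : ℕ) :
    Measurable (bisectionIndex h m) := by
  induction m with
  | zero => exact measurable_const
  | succ m ih =>
    have hpiece (j : ℕ) : MeasurableSet (bisectionIndex h m ⁻¹' {j}) :=
      ih (measurableSet_singleton j)
    refine measurable_to_countable' fun j ↦ ?_
    obtain ⟨i, rfl | rfl⟩ := j.even_or_odd'
    · rw [bisectionIndex_succ_preimage_even hh.subset]
      exact hh.measurableSet (hpiece i)
    · rw [bisectionIndex_succ_preimage_odd]
      exact (hpiece i).diff (hh.measurableSet (hpiece i))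

lemma measurable_bisectionPoint (hh : IsHalvingMap h L) : Measurable (bisectionPoint h) := by
  refine Measurable.iSup fun m ↦ ?_
  have := hh.measurable_bisectionIndex m
  fun_prop

variable [IsFiniteMeasure v]

lemma measure_bisectionIndex_preimage_singleton (hh : IsHalvingMap h L) (hv : v ∈ L) {m j : ℕ}
    (hj : j < 2 ^ m) : v (bisectionIndex h m ⁻¹' {j}) = v univ / 2 ^ m := by
  induction m generalizing j with
  | zero =>
    obtain rfl : j = 0 := by simpa using hj
    have huniv : bisectionIndex h 0 ⁻¹' {0} = univ := eq_univ_of_forall fun _ ↦ rfl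
    rw [huniv, pow_zero, div_one]
  | succ m ih =>
    have hdiv : v univ / 2 ^ (m + 1) = v univ / 2 ^ m / 2 := by
      simp only [div_eq_mul_inv, pow_succ, mul_assoc]
      rw [ENNReal.mul_inv (.inr ENNReal.ofNat_ne_top) (.inr two_ne_zero)]
    have hpiece (j : ℕ) : MeasurableSet (bisectionIndex h m ⁻¹' {j}) :=
      hh.measurable_bisectionIndex m (measurableSet_singleton j)
    obtain ⟨i, rfl | rfl⟩ := j.even_or_odd'
    · rw [bisectionIndex_succ_preimage_even hh.subset, hh.measure_eq (hpiece i) hv, ih (by lia),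
        hdiv]
    · rw [bisectionIndex_succ_preimage_odd,
        measure_sdiff (hh.subset _) (hh.measurableSet (hpiece i)).nullMeasurableSet (by finiteness),
        hh.measure_eq (hpiece i) hv, ENNReal.sub_half (by finiteness), ih (by lia), hdiv]

lemma measureReal_bisectionIndex_lt (hh : IsHalvingMap h L) (hv : v ∈ L) {m j : ℕ}
    (hj : j ≤ 2 ^ m) : v.real {x | bisectionIndex h m x < j} = j / 2 ^ m * v.real univ := by
  have hpreimage : {x | bisectionIndex h m x < j} = bisectionIndex h m ⁻¹' (Finset.range j) := by
    ext; simp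
  have hpiece : ∀ i ∈ Finset.range j,
      v.real (bisectionIndex h m ⁻¹' {i}) = v.real univ / 2 ^ m := fun i hi ↦ by
    rw [measureReal_def, hh.measure_bisectionIndex_preimage_singleton hv
      ((Finset.mem_range.1 hi).trans_le hj)]
    simp [measureReal_def]
  rw [hpreimage, ← sum_measureReal_preimage_singleton _ fun i _ ↦
    hh.measurable_bisectionIndex m (measurableSet_singleton i), Finset.sum_congr rfl hpiece,
    Finset.sum_const, Finset.card_range, nsmul_eq_mul]
  ring

lemma measureReal_bisectionPoint_le (hh : IsHalvingMap h L) (hv : v ∈ L) {t : ℝ} (ht : t ∈ I) :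
    v.real {x | bisectionPoint h x ≤ t} = t * v.real univ := by
  obtain rfl | ht1 := ht.2.eq_or_lt
  · have huniv : {x | bisectionPoint h x ≤ 1} = univ :=
      eq_univ_of_forall fun x ↦ (bisectionPoint_mem_unitInterval h x).2
    rw [huniv, one_mul]
  have hfloor (m : ℕ) : ⌊t * 2 ^ m⌋₊ < 2 ^ m := by
    rw [Nat.floor_lt (mul_nonneg ht.1 (by positivity))]
    push_cast
    exact mul_lt_of_lt_one_left (by positivity) ht1
  have hlower (m : ℕ) :
      ⌊t * 2 ^ m⌋₊ / 2 ^ m * v.real univ ≤ v.real {x | bisectionPoint h x ≤ t} := by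
    rw [← hh.measureReal_bisectionIndex_lt hv (hfloor m).le]
    exact measureReal_mono fun x ↦ bisectionPoint_le_of_bisectionIndex_lt_floor h ht.1
  have hupper (m : ℕ) : v.real {x | bisectionPoint h x ≤ t} ≤
      (⌊t * 2 ^ m⌋₊ / 2 ^ m + (1 / 2) ^ m) * v.real univ := by
    have hsucc : (⌊t * 2 ^ m⌋₊ / 2 ^ m + (1 / 2) ^ m : ℝ) = (⌊t * 2 ^ m⌋₊ + 1 : ℕ) / 2 ^ m := by
      rw [one_div_pow, Nat.cast_succ, add_div]
    rw [hsucc, ← hh.measureReal_bisectionIndex_lt hv (hfloor m)]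
    exact measureReal_mono fun x hx ↦
      Nat.lt_succ_of_le (bisectionIndex_le_floor_of_bisectionPoint_le h hx m)
  have hlim : Tendsto (fun m : ℕ ↦ (⌊t * 2 ^ m⌋₊ / 2 ^ m : ℝ)) atTop (𝓝 t) :=
    (tendsto_nat_floor_mul_div_atTop ht.1).comp (tendsto_pow_atTop_atTop_of_one_lt one_lt_two)
  have hzero : Tendsto (fun m : ℕ ↦ (1 / 2 : ℝ) ^ m) atTop (𝓝 0) :=
    tendsto_pow_atTop_nhds_zero_of_lt_one (by norm_num) (by norm_num)
  have hlim' : Tendsto (fun m : ℕ ↦ (⌊t * 2 ^ m⌋₊ / 2 ^ m + (1 / 2) ^ m) * v.real univ) atTop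
      (𝓝 (t * v.real univ)) := by
    simpa only [add_zero] using (hlim.add hzero).mul_const (v.real univ)
  exact le_antisymm (ge_of_tendsto' hlim' hupper) (le_of_tendsto' (hlim.mul_const _) hlower)

end IsHalvingMap

namespace SimultaneouslyHalvable

variable {L L' : Set (Measure Ω)}

lemma mono (hL : SimultaneouslyHalvable L) (hsub : L' ⊆ L) : SimultaneouslyHalvable L' :=
  fun A hA ↦
    let ⟨B, hBA, hB, hhalf⟩ := hL A hA
    ⟨B, hBA, hB, fun v hv ↦ hhalf v (hsub hv)⟩

lemma image_restrict (hL : SimultaneouslyHalvable L) {A : Set Ω} (hA : MeasurableSet A) :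
    SimultaneouslyHalvable ((·.restrict A) '' L) := by
  intro C hC
  obtain ⟨B, hBC, hB, hhalf⟩ := hL (C ∩ A) (hC.inter hA)
  refine ⟨B, hBC.trans inter_subset_left, hB, ?_⟩
  rintro _ ⟨v, hv, rfl⟩
  rw [Measure.restrict_apply hB, Measure.restrict_apply hC,
    inter_eq_left.2 (hBC.trans inter_subset_right), hhalf v hv]

lemma of_forall_restrict
    (h : ∀ A, MeasurableSet A → ∃ B, MeasurableSet B ∧
      ∀ v ∈ L, v.restrict A B = v.restrict A univ / 2) :
    SimultaneouslyHalvable L := by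
  intro A hA
  obtain ⟨B, hB, hhalf⟩ := h A hA
  refine ⟨B ∩ A, inter_subset_right, hB.inter hA, fun v hv ↦ ?_⟩
  simpa only [Measure.restrict_apply hB, Measure.restrict_apply_univ] using hhalf v hv

lemma exists_isHalvingMap (hL : SimultaneouslyHalvable L) :
    ∃ h : Set Ω → Set Ω, IsHalvingMap h L := by
  have hex (C : Set Ω) :
      ∃ B ⊆ C, MeasurableSet C → MeasurableSet B ∧ ∀ v ∈ L, v B = v C / 2 := by
    by_cases hC : MeasurableSet C
    · obtain ⟨B, hBC, hB⟩ := hL C hC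
      exact ⟨B, hBC, fun _ ↦ hB⟩
    · exact ⟨∅, empty_subset C, fun h ↦ absurd h hC⟩
  choose h hsub hmeas using hex
  exact ⟨h, hsub, fun {_} hC ↦ (hmeas _ hC).1, fun {_} hC {_} hv ↦ (hmeas _ hC).2 _ hv⟩

theorem exists_measurable_map_eq_smul_volume (hL : SimultaneouslyHalvable L)
    (hfin : ∀ v ∈ L, IsFiniteMeasure v) :
    ∃ U : Ω → I, Measurable U ∧ ∀ v ∈ L, v.map U = v univ • volume := by
  obtain ⟨h, hh⟩ := hL.exists_isHalvingMap
  have hU : Measurable fun x ↦ (⟨_, bisectionPoint_mem_unitInterval h x⟩ : I) :=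
    hh.measurable_bisectionPoint.subtype_mk
  refine ⟨_, hU, fun v hv ↦ ?_⟩
  have := hfin v hv
  refine Measure.ext_of_Iic _ _ fun t ↦ ?_
  have ht := hh.measureReal_bisectionPoint_le hv t.2
  rw [Measure.map_apply hU measurableSet_Iic, Measure.smul_apply, unitInterval.volume_Iic,
    smul_eq_mul, mul_comm, ← ofReal_measureReal (μ := v) (s := univ),
    ← ENNReal.ofReal_mul t.2.1, ← ht, ofReal_measureReal]
  rfl

lemma singleton_of_injective {μ : Measure Ω} [IsFiniteMeasure μ] [NullSingletonClass μ]
    {e : Ω → I} (he : Measurable e) (hinj : e.Injective) : SimultaneouslyHalvable {μ} := by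
  refine of_forall_restrict fun A _ ↦ ?_
  have := nullSingletonClass_map_of_injective (μ.restrict A) he hinj
  obtain ⟨s, -, hs⟩ := exists_measure_halfWindow_eq_half ((μ.restrict A).map e)
  refine ⟨e ⁻¹' halfWindow s, he (measurableSet_halfWindow s), ?_⟩
  rintro v rfl
  rwa [Measure.map_apply he (measurableSet_halfWindow s), Measure.map_apply he .univ] at hs

lemma insert_of_absolutelyContinuous (hL : SimultaneouslyHalvable L)
    (hfin : ∀ v ∈ L, IsFiniteMeasure v) {μ w : Measure Ω} [IsFiniteMeasure w] (hμ : μ ∈ L)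
    (hw : w ≪ μ) : SimultaneouslyHalvable (insert w L) := by
  refine of_forall_restrict fun A hA ↦ ?_
  obtain ⟨U, hU, hmap⟩ := (hL.image_restrict hA).exists_measurable_map_eq_smul_volume <| by
    rintro _ ⟨v, hv, rfl⟩
    have := hfin v hv
    infer_instance
  replace hmap := forall_mem_image.1 hmap
  have hac : (w.restrict A).map U ≪ (volume : Measure I) :=
    ((hw.restrict A).map hU).trans (hmap hμ ▸ Measure.smul_absolutelyContinuous)
  have : NullSingletonClass ((w.restrict A).map U) := ⟨fun x ↦ hac (measure_singleton x)⟩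
  obtain ⟨s, hs, hhalf⟩ := exists_measure_halfWindow_eq_half ((w.restrict A).map U)
  refine ⟨U ⁻¹' halfWindow s, hU (measurableSet_halfWindow s), ?_⟩
  rintro v (rfl | hv)
  · rwa [Measure.map_apply hU (measurableSet_halfWindow s), Measure.map_apply hU .univ] at hhalf
  · rw [← Measure.map_apply hU (measurableSet_halfWindow s), hmap hv, Measure.smul_apply,
      volume_halfWindow hs, smul_eq_mul, mul_one_div]

end SimultaneouslyHalvable

variable [MeasurableSpace.CountablySeparated Ω]

variable (Ω) in
lemma exists_measurable_injective_unitInterval :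
    ∃ e : Ω → I, Measurable e ∧ e.Injective := by
  obtain ⟨c, hc, hinj⟩ := MeasurableSpace.measurable_injection_nat_bool_of_countablySeparated Ω
  have hemb := measurableEmbedding_sigmoid_comp_embeddingReal (ℕ → Bool)
  exact ⟨_, hemb.measurable.comp hc, hemb.injective.comp hinj⟩

theorem simultaneouslyHalvable_of_finite {L : Set (Measure Ω)} (hL : L.Finite) {μ : Measure Ω}
    [IsFiniteMeasure μ] [NullSingletonClass μ] (hle : ∀ v ∈ L, v ≤ μ) :
    SimultaneouslyHalvable L := by
  suffices h : SimultaneouslyHalvable (insert μ L) from h.mono (subset_insert μ L)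
  induction L, hL using Set.Finite.induction_on with
  | empty =>
    obtain ⟨e, he, hinj⟩ := exists_measurable_injective_unitInterval Ω
    simpa only [insert_empty_eq] using SimultaneouslyHalvable.singleton_of_injective he hinj
  | @insert w L _ _ ih =>
    rw [forall_mem_insert] at hle
    have := isFiniteMeasure_of_le μ hle.1
    rw [insert_comm]
    refine (ih hle.2).insert_of_absolutelyContinuous ?_ (mem_insert μ L)
      (Measure.absolutelyContinuous_of_le hle.1)
    rw [forall_mem_insert]
    exact ⟨‹_›, fun v hv ↦ isFiniteMeasure_of_le μ (hle.2 v hv)⟩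

end Halving

section Randomization

variable {Ω ι : Type*} [MeasurableSpace Ω]

lemma nullSingletonClass_sum [Countable ι] (u : ι → Measure Ω) [∀ i, NullSingletonClass (u i)] :
    NullSingletonClass (Measure.sum u) where
  measure_singleton x := by simp [Measure.sum_apply_of_countable]

variable [MeasurableSpace.CountablySeparated Ω]

theorem exists_measurable_forall_map_eq_smul [Finite ι] (u : ι → Measure Ω)
    [∀ i, IsFiniteMeasure (u i)] [∀ i, NullSingletonClass (u i)] {Y : Type*} [MeasurableSpace Y]
    [StandardBorelSpace Y] (ρ : Measure Y) [IsProbabilityMeasure ρ] :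
    ∃ f : Ω → Y, Measurable f ∧ ∀ i, (u i).map f = u i univ • ρ := by
  have := nullSingletonClass_sum u
  have hhalf : SimultaneouslyHalvable (range u) :=
    simultaneouslyHalvable_of_finite (finite_range u) (forall_mem_range.2 (Measure.le_sum u))
  obtain ⟨U, hU, hmap⟩ :=
    hhalf.exists_measurable_map_eq_smul_volume (forall_mem_range.2 inferInstance)
  have : Nonempty Y := nonempty_of_isProbabilityMeasure ρ
  obtain ⟨g, hg, hgρ⟩ := ρ.exists_measurable_map_eq
  refine ⟨g ∘ U, hg.comp hU, fun i ↦ ?_⟩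
  rw [← Measure.map_map hg hU, hmap _ (mem_range_self i), Measure.map_smul, hgρ]

end Randomization

theorem exists_measurable_forall_measure_preimage_eq {Ω ι κ : Type*} [MeasurableSpace Ω]
    [MeasurableSpace.CountablySeparated Ω] [Finite ι] (u : ι → Measure Ω)
    [∀ i, IsFiniteMeasure (u i)] [∀ i, NullSingletonClass (u i)] [Fintype κ] {lam : κ → ℝ}
    (hlam0 : ∀ j, 0 ≤ lam j) (hlam1 : ∑ j, lam j = 1) :
    ∃ f : Ω → κ, ∀ s : Finset κ, MeasurableSet (f ⁻¹' s) ∧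
      ∀ i, u i (f ⁻¹' s) = ENNReal.ofReal (∑ j ∈ s, lam j) * u i univ := by
  let _ : MeasurableSpace κ := ⊤
  have hsum : ∑ j, ENNReal.ofReal (lam j) = 1 := by
    rw [← ENNReal.ofReal_sum_of_nonneg fun j _ ↦ hlam0 j, hlam1, ENNReal.ofReal_one]
  obtain ⟨f, hf, hmap⟩ := exists_measurable_forall_map_eq_smul u (PMF.ofFintype _ hsum).toMeasure
  refine ⟨f, fun s ↦ ⟨hf .of_discrete, fun i ↦ ?_⟩⟩
  rw [← Measure.map_apply hf .of_discrete, hmap i, Measure.smul_apply, PMF.toMeasure_apply_finset,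
    ENNReal.ofReal_sum_of_nonneg fun j _ ↦ hlam0 j, smul_eq_mul, mul_comm]
  rfl

theorem uniform_guarantee_extends_to_additive_utilities_general {Ω ι κ M : Type*}
    [MeasurableSpace Ω] [MeasurableSpace.CountablySeparated Ω] [Fintype ι] [Fintype κ]
    [DecidableEq ι] [AddCommMonoid M] [LE M] (d : ι → M) (S : M) (r : ℝ)
    (B : κ → Finset ι) (lam : κ → ℝ)
    (hlam0 : ∀ j, 0 ≤ lam j) (hlam1 : ∑ j, lam j = 1)
    (hcap : ∀ j, ∑ i ∈ B j, d i ≤ S)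
    (hcov : ∀ i, r ≤ ∑ j ∈ Finset.univ.filter (fun j ↦ i ∈ B j), lam j)
    (u : ι → Measure Ω) [∀ i, NullSingletonClass (u i)]
    {A : Set Ω} (hA : MeasurableSet A) (hfin : ∀ i, u i A ≠ ⊤) :
    ∃ X : ι → Set Ω,
      (∀ i, MeasurableSet (X i)) ∧
      (∀ i, X i ⊆ A) ∧
      (∀ t ∈ A, ∑ i, (X i).indicator (fun _ ↦ d i) t ≤ S) ∧
      (∀ i, ENNReal.ofReal r * u i A ≤ u i (X i)) := by
  have (i : ι) : IsFiniteMeasure ((u i).restrict A) := isFiniteMeasure_restrict.2 (hfin i)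
  obtain ⟨f, hf⟩ :=
    exists_measurable_forall_measure_preimage_eq (fun i ↦ (u i).restrict A) hlam0 hlam1
  let bins (i : ι) : Finset κ := Finset.univ.filter fun j ↦ i ∈ B j
  refine ⟨fun i ↦ f ⁻¹' bins i ∩ A, fun i ↦ (hf _).1.inter hA, fun i ↦ inter_subset_right,
    fun t ht ↦ ?_, fun i ↦ ?_⟩
  · have hload : ∑ i, (f ⁻¹' bins i ∩ A).indicator (fun _ ↦ d i) t = ∑ i ∈ B (f t), d i := by
      have hmem (i : ι) : t ∈ f ⁻¹' bins i ∩ A ↔ i ∈ B (f t) := by simp [bins, ht]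
      classical
      simp_rw [indicator_apply, hmem, Finset.sum_ite_mem, Finset.univ_inter]
    rw [hload]
    exact hcap (f t)
  · have hshare := (hf (bins i)).2 i
    rw [Measure.restrict_apply (hf _).1, Measure.restrict_apply_univ] at hshare
    rw [hshare]
    gcongr
    exact hcov i

/-- If a fractional combination of feasible bins (weights `λ j ≥ 0` summing to 1, each bin
within capacity `S`) gives every agent total weight at least `r`, then for arbitrary
nonatomic finite Borel utility measures `u i` on `[0,T]` there is a feasible allocation
guaranteeing every agent at least an `r` fraction of his total utility. -/
theorem uniform_guarantee_extends_to_additive_utilities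
    (n k : ℕ) (d : Fin n → ℝ) (S T r : ℝ)
    (hd : ∀ i, 0 < d i) (hS : 0 < S) (hT : 0 < T)
    (B : Fin k → Finset (Fin n)) (lam : Fin k → ℝ)
    (hlam0 : ∀ j, 0 ≤ lam j) (hlam1 : ∑ j, lam j = 1)
    (hcap : ∀ j, ∑ i ∈ B j, d i ≤ S)
    (hcov : ∀ i, r ≤ ∑ j ∈ Finset.univ.filter (fun j => i ∈ B j), lam j)
    (u : Fin n → Measure ℝ)
    (hfin : ∀ i, IsFiniteMeasure (u i))
    (hatom : ∀ i, NoAtoms (u i)) :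
    ∃ X : Fin n → Set ℝ,
      (∀ i, MeasurableSet (X i)) ∧
      (∀ i, X i ⊆ Set.Icc 0 T) ∧
      (∀ t ∈ Set.Icc (0 : ℝ) T, ∑ i, (X i).indicator (fun _ => d i) t ≤ S) ∧
      (∀ i, ENNReal.ofReal r * u i (Set.Icc 0 T) ≤ u i (X i)) := by
  have : ∀ i, NullSingletonClass (u i) := hatom
  exact uniform_guarantee_extends_to_additive_utilities_general d S r B lam hlam0 hlam1 hcap hcov u
    measurableSet_Icc fun i ↦ measure_ne_top (u i) _
end

section
/- Let n ≥ 2, and consider the electricity division instance on the interval [0,1] with supply S = n-1, agents 1, …, n-1 each having demand 1, and agent n having demand n-1. Let v_1, …, v_{n-1} be nonatomic Borel probability measures on [0,1] and let v_n := (v_1 + ⋯ + v_{n-1})/(n-1). Then every feasible allocation X_1, …, X_n satisfies min over all agents i of v_i(X_i) ≤ 1/2; that is, the egalitarian value of this instance is at most 1/2. -/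
open MeasureTheory Set

/-!
No other agent can be connected together with the last one, so the share `X i` of every other
agent `i` is disjoint from the share `Y` of the last agent. Some such `i` values `Y` at least as
much as the average of the others does, that is, at least as much as the last agent. Since `v i`
has total mass one, either `v i (X i) ≤ 1 / 2` or `v i Y ≤ 1 / 2`, and in the second case the last
agent's utility is at most `1 / 2`.
-/

/-- A feasible allocation of the time domain `I` to agents with demands `d` under the supply `S`:
agent `i` is connected during `X i`, and the connected demand never exceeds the supply.
Measurability of the sets `X i` is required separately, where it is needed. -/
structure IsFeasibleAllocation {ι α M : Type*} [Fintype ι] [AddCommMonoid M] [LE M]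
    (I : Set α) (S : M) (d : ι → M) (X : ι → Set α) : Prop where
  subset : ∀ i, X i ⊆ I
  demand_le : ∀ t ∈ I, ∑ i, (X i).indicator (fun _ => d i) t ≤ S

theorem IsFeasibleAllocation.disjoint {ι α M : Type*} [Fintype ι] [AddCommMonoid M]
    [PartialOrder M] [IsOrderedAddMonoid M] {I : Set α} {S : M} {d : ι → M} {X : ι → Set α}
    (hX : IsFeasibleAllocation I S d X) (hd : ∀ i, 0 ≤ d i) {i j : ι} (hij : i ≠ j)
    (hS : S < d i + d j) : Disjoint (X i) (X j) := by
  classical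
  refine Set.disjoint_left.mpr fun t hti htj => hS.not_ge ?_
  calc d i + d j = ∑ k ∈ {i, j}, (X k).indicator (fun _ => d k) t := by
        rw [Finset.sum_pair hij, indicator_of_mem hti, indicator_of_mem htj]
    _ ≤ ∑ k, (X k).indicator (fun _ => d k) t :=
        Finset.sum_le_univ_sum_of_nonneg fun k => indicator_nonneg (fun _ _ => hd k) t
    _ ≤ S := hX.demand_le t (hX.subset i hti)

theorem measure_le_half_or_measure_le_half_of_disjoint {α : Type*} [MeasurableSpace α]
    (μ : Measure α) [IsZeroOrProbabilityMeasure μ] {s t : Set α} (hst : Disjoint s t)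
    (ht : MeasurableSet t) : μ s ≤ 1 / 2 ∨ μ t ≤ 1 / 2 := by
  by_contra! h
  refine (ENNReal.add_lt_add h.1 h.2).not_ge ?_
  rw [ENNReal.add_halves, ← measure_union hst ht]
  exact prob_le_one

theorem exists_sum_mul_le_of_sum_eq_one {ι R : Type*} [Semiring R] [LinearOrder R]
    [IsOrderedRing R] [Nontrivial R] {s : Finset ι} {w : ι → R} (hw₀ : ∀ i ∈ s, 0 ≤ w i)
    (hw₁ : ∑ i ∈ s, w i = 1) (f : ι → R) : ∃ j ∈ s, ∑ i ∈ s, w i * f i ≤ f j := by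
  have hs : s.Nonempty := Finset.nonempty_of_sum_ne_zero (hw₁ ▸ one_ne_zero)
  obtain ⟨j, hj, hmax⟩ := s.exists_max_image f hs
  refine ⟨j, hj, ?_⟩
  calc ∑ i ∈ s, w i * f i ≤ ∑ i ∈ s, w i * f j :=
        Finset.sum_le_sum fun i hi => mul_le_mul_of_nonneg_left (hmax i hi) (hw₀ i hi)
    _ = f j := by rw [← Finset.sum_mul, hw₁, one_mul]

theorem sum_filter_val_lt_inv_natCast {m n : ℕ} (hm : m ≠ 0) (hmn : m ≤ n) :
    ∑ _i : Fin n with _i.val < m, (m : ENNReal)⁻¹ = 1 := by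
  rw [Finset.sum_const, Fin.card_filter_val_lt, min_eq_right hmn, nsmul_eq_mul]
  exact ENNReal.mul_inv_cancel (Nat.cast_ne_zero.mpr hm) (ENNReal.natCast_ne_top m)

theorem reduction_instance_egalitarian_at_most_half_general {ι α M : Type*} [Fintype ι]
    [MeasurableSpace α] [AddCommMonoid M] [PartialOrder M] [IsOrderedAddMonoid M]
    {I : Set α} {S : M} {d : ι → M} {X : ι → Set α} (hX : IsFeasibleAllocation I S d X)
    (hd : ∀ i, 0 ≤ d i) {s : Finset ι} {l : ι} (hl : l ∉ s) (hS : ∀ i ∈ s, S < d i + d l)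
    (hmeas : MeasurableSet (X l)) {v : ι → Measure α}
    (hprob : ∀ i ∈ s, IsProbabilityMeasure (v i)) {w : ι → ENNReal} (hw : ∑ i ∈ s, w i = 1)
    (hlast : ∀ t, MeasurableSet t → v l t = ∑ i ∈ s, w i * v i t) :
    ∃ i, v i (X i) ≤ 1 / 2 := by
  obtain ⟨i, hi, hle⟩ :=
    exists_sum_mul_le_of_sum_eq_one (fun _ _ => zero_le) hw fun i => v i (X l)
  have := hprob i hi
  have hdisj : Disjoint (X i) (X l) := hX.disjoint hd (ne_of_mem_of_not_mem hi hl) (hS i hi)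
  rcases measure_le_half_or_measure_le_half_of_disjoint (v i) hdisj hmeas with h | h
  · exact ⟨i, h⟩
  · exact ⟨l, (hlast _ hmeas).trans_le (hle.trans h)⟩

/-- The electricity instance constructed in the reduction (supply `n-1`; agents `0,…,n-2`
with demand 1 and nonatomic probability utilities on `[0,1]`; last agent with demand `n-1`
and utility equal to the average of the others) has egalitarian value at most `1/2`:
every feasible allocation gives some agent utility at most `1/2`. -/
theorem reduction_instance_egalitarian_at_most_half
    (n : ℕ) (hn : 2 ≤ n)
    (v : Fin n → Measure ℝ)
    (hprob : ∀ i : Fin n, (i : ℕ) < n - 1 → IsProbabilityMeasure (v i))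
    (hsupp : ∀ i : Fin n, (i : ℕ) < n - 1 → v i (Set.Icc 0 1) = 1)
    (hatom : ∀ i : Fin n, (i : ℕ) < n - 1 → NoAtoms (v i))
    (hlast : ∀ s : Set ℝ, MeasurableSet s →
      v ⟨n - 1, by omega⟩ s =
        ((n - 1 : ℕ) : ENNReal)⁻¹ *
          ∑ i ∈ Finset.univ.filter (fun i : Fin n => (i : ℕ) < n - 1), v i s)
    (X : Fin n → Set ℝ)
    (hmeas : ∀ i, MeasurableSet (X i))
    (hsub : ∀ i, X i ⊆ Set.Icc 0 1)
    (hfeas : ∀ t ∈ Set.Icc (0 : ℝ) 1,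
      ∑ i, (X i).indicator
        (fun _ => if (i : ℕ) < n - 1 then (1 : ℝ) else ((n - 1 : ℕ) : ℝ)) t
        ≤ ((n - 1 : ℕ) : ℝ)) :
    ∃ i, v i (X i) ≤ (1 / 2 : ENNReal) := by
  exact reduction_instance_egalitarian_at_most_half_general (l := ⟨n - 1, by omega⟩)
    (s := Finset.univ.filter fun i => (i : ℕ) < n - 1) ⟨hsub, hfeas⟩
    (fun i => by split_ifs <;> positivity) (by simp)
    (fun i hi => by rw [if_pos (Finset.mem_filter.mp hi).2, if_neg (lt_irrefl _)]; linarith)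
    (hmeas _) (fun i hi => hprob i (Finset.mem_filter.mp hi).2)
    (sum_filter_val_lt_inv_natCast (by omega) (n.sub_le 1))
    fun t ht => by rw [hlast t ht, Finset.mul_sum]
end

section
/- Let n agents have demands d_1, …, d_n > 0 with d_1 + ⋯ + d_n = 2S for supply S > 0. Then there exists a feasible allocation X_1, …, X_n of [0,T] with λ(X_i) ≥ T/2 for every agent i if and only if {1,…,n} can be partitioned into two sets A and B such that the sum of d_i over i ∈ A is at most S and the sum of d_i over i ∈ B is at most S. -/
open MeasureTheory Set

/-!
If every agent is connected at least half of the time, the time average of the connected demand is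
at least half of the total demand, so at some instant the connected agents draw at least `S`. By
feasibility they draw at most `S`, and since the total is `2S`, so do the agents that are
disconnected at that instant. Conversely, the two parts of a partition are served in two
consecutive shifts of equal length.
-/

section Demand

variable {ι Ω : Type*} [Fintype ι]

/-- The demand connected at time `t`: the sum of `d i` over the agents `i` with `t ∈ X i`. It is
written with indicator functions so that it can be integrated termwise in `t`. -/
noncomputable def connectedDemand (d : ι → ℝ) (X : ι → Set Ω) (t : Ω) : ℝ :=
  ∑ i, (X i).indicator (fun _ => d i) t

variable {d : ι → ℝ} {X : ι → Set Ω}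

open Classical in
theorem connectedDemand_eq_sum_filter (t : Ω) : connectedDemand d X t = ∑ i with t ∈ X i, d i :=
  Finset.sum_indicator_eq_sum_filter _ (fun i _ => d i) X fun _ => t

variable [MeasurableSpace Ω] {μ : Measure Ω} {s : Set Ω}

theorem integrableOn_indicator_const (hs : μ s ≠ ⊤) {u : Set Ω} (hu : MeasurableSet u) (c : ℝ) :
    IntegrableOn (u.indicator fun _ => c) s μ :=
  (integrableOn_const hs).indicator hu

theorem integrableOn_connectedDemand (hs : μ s ≠ ⊤) (hX : ∀ i, MeasurableSet (X i)) :
    IntegrableOn (connectedDemand d X) s μ :=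
  integrable_finsetSum _ fun i _ => integrableOn_indicator_const hs (hX i) (d i)

theorem setAverage_connectedDemand (hs : μ s ≠ ⊤) (hX : ∀ i, MeasurableSet (X i)) :
    ⨍ t in s, connectedDemand d X t ∂μ = ∑ i, μ.real (s ∩ X i) / μ.real s * d i := by
  have integral_eq : ∫ t in s, connectedDemand d X t ∂μ = ∑ i, μ.real (s ∩ X i) * d i := by
    simp only [connectedDemand]
    rw [integral_finsetSum _ fun i _ => integrableOn_indicator_const hs (hX i) (d i)]
    simp only [setIntegral_indicator (hX _), setIntegral_const, smul_eq_mul]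
  rw [setAverage_eq, integral_eq, smul_eq_mul, Finset.mul_sum]
  exact Finset.sum_congr rfl fun i _ => by ring

theorem exists_mul_sum_le_connectedDemand (hs₀ : μ s ≠ 0) (hs : μ s ≠ ⊤) (hd : 0 ≤ d)
    (hX : ∀ i, MeasurableSet (X i)) {r : ℝ} (hr : ∀ i, r * μ.real s ≤ μ.real (s ∩ X i)) :
    ∃ t ∈ s, r * ∑ i, d i ≤ connectedDemand d X t := by
  have hs_pos : 0 < μ.real s := ENNReal.toReal_pos hs₀ hs
  obtain ⟨t, ht, average_le⟩ := exists_setAverage_le hs₀ hs (integrableOn_connectedDemand hs hX)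
  refine ⟨t, ht, ?_⟩
  calc r * ∑ i, d i = ∑ i, r * d i := Finset.mul_sum ..
    _ ≤ ∑ i, μ.real (s ∩ X i) / μ.real s * d i := Finset.sum_le_sum fun i _ =>
        mul_le_mul_of_nonneg_right ((le_div_iff₀ hs_pos).2 (hr i)) (hd i)
    _ = ⨍ t in s, connectedDemand d X t ∂μ := (setAverage_connectedDemand hs hX).symm
    _ ≤ connectedDemand d X t := average_le

/-- A feasible allocation of the set of times `s` with supply `S`: agent `i` is connected at the
times in `X i`. -/
def IsFeasibleAllocation_s10 (s : Set Ω) (d : ι → ℝ) (S : ℝ) (X : ι → Set Ω) : Prop :=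
  (∀ i, MeasurableSet (X i)) ∧ (∀ i, X i ⊆ s) ∧ ∀ t ∈ s, connectedDemand d X t ≤ S

variable [DecidableEq ι] {S : ℝ}

theorem IsFeasibleAllocation_s10.exists_partition (hX : IsFeasibleAllocation_s10 s d S X)
    (hs₀ : μ s ≠ 0) (hs : μ s ≠ ⊤) (hd : 0 ≤ d) (hsum : 2 * S ≤ ∑ i, d i)
    (hhalf : ∀ i, μ s / 2 ≤ μ (X i)) :
    ∃ A : Finset ι, ∑ i ∈ A, d i ≤ S ∧ ∑ i ∈ Aᶜ, d i ≤ S := by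
  classical
  obtain ⟨hmeas, hsub, hsupply⟩ := hX
  have real_half : ∀ i, 1 / 2 * μ.real s ≤ μ.real (s ∩ X i) := fun i => by
    rw [inter_eq_right.2 (hsub i)]
    calc
      1 / 2 * μ.real s = (μ s / 2).toReal := by
        rw [ENNReal.toReal_div, one_div_mul_eq_div, Measure.real, ENNReal.toReal_ofNat]
      _ ≤ μ.real (X i) := ENNReal.toReal_mono (measure_ne_top_of_subset (hsub i) hs) (hhalf i)
  obtain ⟨t, ht, half_le⟩ := exists_mul_sum_le_connectedDemand hs₀ hs hd hmeas real_half
  have le_supply := hsupply t ht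
  rw [connectedDemand_eq_sum_filter] at half_le le_supply
  have total := Finset.sum_add_sum_compl {i | t ∈ X i} d
  exact ⟨Finset.univ.filter (t ∈ X ·), le_supply, by linarith [hsum]⟩

end Demand

section TwoShift

variable {ι Ω : Type*} [DecidableEq ι] {A : Finset ι} {P Q : Set Ω}

/-- The allocation that connects the agents in `A` during `P` and all other agents during `Q`. It
turns a partition of the agents into a feasible allocation of `P ∪ Q`. -/
def twoShiftAllocation (A : Finset ι) (P Q : Set Ω) (i : ι) : Set Ω :=
  if i ∈ A then P else Q

theorem twoShiftAllocation_induction {p : Set Ω → Prop} (hP : p P) (hQ : p Q) (i : ι) :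
    p (twoShiftAllocation A P Q i) := by
  unfold twoShiftAllocation
  split_ifs <;> assumption

variable [Fintype ι] {d : ι → ℝ}

theorem connectedDemand_twoShiftAllocation (t : Ω) :
    connectedDemand d (twoShiftAllocation A P Q) t =
      P.indicator (fun _ => ∑ i ∈ A, d i) t + Q.indicator (fun _ => ∑ i ∈ Aᶜ, d i) t := by
  have on_A : ∀ i ∈ A, (twoShiftAllocation A P Q i).indicator (fun _ => d i) t =
      P.indicator (fun _ => d i) t := fun i hi => by rw [twoShiftAllocation, if_pos hi]
  have on_compl : ∀ i ∈ Aᶜ, (twoShiftAllocation A P Q i).indicator (fun _ => d i) t =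
      Q.indicator (fun _ => d i) t := fun i hi => by
    rw [twoShiftAllocation, if_neg (Finset.mem_compl.1 hi)]
  rw [connectedDemand, ← Finset.sum_add_sum_compl A, Finset.sum_congr rfl on_A,
    Finset.sum_congr rfl on_compl]
  classical simp only [indicator_apply, Finset.sum_ite_irrel, Finset.sum_const_zero]

theorem isFeasibleAllocation_twoShiftAllocation [MeasurableSpace Ω] {S : ℝ}
    (hP : MeasurableSet P) (hQ : MeasurableSet Q) (hPQ : Disjoint P Q)
    (hA : ∑ i ∈ A, d i ≤ S) (hAc : ∑ i ∈ Aᶜ, d i ≤ S) :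
    IsFeasibleAllocation_s10 (P ∪ Q) d S (twoShiftAllocation A P Q) := by
  refine ⟨twoShiftAllocation_induction hP hQ,
    twoShiftAllocation_induction (p := (· ⊆ P ∪ Q)) subset_union_left subset_union_right, ?_⟩
  rintro t (ht | ht) <;> rw [connectedDemand_twoShiftAllocation]
  · simpa [ht, hPQ.notMem_of_mem_left ht] using hA
  · simpa [ht, hPQ.notMem_of_mem_right ht] using hAc

end TwoShift

theorem half_time_allocation_iff_partition_general {ι Ω : Type*} [Fintype ι] [DecidableEq ι]
    [MeasurableSpace Ω] {μ : Measure Ω} {P Q : Set Ω} (hP : MeasurableSet P)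
    (hQ : MeasurableSet Q) (hPQ : Disjoint P Q) (hμ : μ P = μ Q) (hP₀ : μ P ≠ 0) (hP_top : μ P ≠ ⊤)
    {d : ι → ℝ} {S : ℝ} (hd : 0 ≤ d) (hsum : 2 * S ≤ ∑ i, d i) :
    (∃ X, IsFeasibleAllocation_s10 (P ∪ Q) d S X ∧ ∀ i, μ P ≤ μ (X i)) ↔
      ∃ A : Finset ι, ∑ i ∈ A, d i ≤ S ∧ ∑ i ∈ Aᶜ, d i ≤ S := by
  have measure_union_eq : μ (P ∪ Q) = 2 * μ P := by rw [measure_union hPQ hQ, ← hμ, two_mul]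
  have half_eq : μ (P ∪ Q) / 2 = μ P := by
    rw [measure_union_eq, mul_comm, ENNReal.mul_div_cancel_right two_ne_zero ENNReal.ofNat_ne_top]
  constructor
  · rintro ⟨X, hX, hhalf⟩
    refine hX.exists_partition (μ := μ) ?_ ?_ hd hsum (by rwa [half_eq])
    · simp [measure_union_eq, hP₀]
    · simp [measure_union_eq, ENNReal.mul_eq_top, hP_top]
  · rintro ⟨A, hA, hAc⟩
    exact ⟨twoShiftAllocation A P Q, isFeasibleAllocation_twoShiftAllocation hP hQ hPQ hA hAc,
      twoShiftAllocation_induction (p := (μ P ≤ μ ·)) le_rfl hμ.le⟩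

/-- Reduction from Partition: when the total demand equals `2S`, every agent can be
connected at least half of the time iff the demands can be split into two sets each
of total demand at most `S`. -/
theorem half_time_allocation_iff_partition
    (n : ℕ) (d : Fin n → ℝ) (S T : ℝ)
    (hd : ∀ i, 0 < d i) (hS : 0 < S) (hT : 0 < T)
    (hsum : ∑ i, d i = 2 * S) :
    (∃ X : Fin n → Set ℝ,
      (∀ i, MeasurableSet (X i)) ∧
      (∀ i, X i ⊆ Set.Icc 0 T) ∧
      (∀ t ∈ Set.Icc (0 : ℝ) T, ∑ i, (X i).indicator (fun _ => d i) t ≤ S) ∧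
      (∀ i, ENNReal.ofReal (T / 2) ≤ volume (X i))) ↔
    (∃ A : Finset (Fin n), ∑ i ∈ A, d i ≤ S ∧ ∑ i ∈ Aᶜ, d i ≤ S) := by
  have shifts_cover : Icc 0 (T / 2) ∪ Ioc (T / 2) T = Icc 0 T :=
    Icc_union_Ioc_eq_Icc (by linarith) (by linarith)
  have shifts_disjoint : Disjoint (Icc 0 (T / 2)) (Ioc (T / 2) T) :=
    (Iic_disjoint_Ioc le_rfl).mono_left Icc_subset_Iic_self
  have shifts_volume : volume (Icc 0 (T / 2)) = volume (Ioc (T / 2) T) := by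
    rw [Real.volume_Icc, Real.volume_Ioc, sub_zero, sub_half]
  simpa [IsFeasibleAllocation_s10, connectedDemand, shifts_cover, and_assoc] using
    half_time_allocation_iff_partition_general measurableSet_Icc measurableSet_Ioc shifts_disjoint
      shifts_volume (by simpa using hT) (by simp) (fun i => (hd i).le) hsum.ge
end

section
/- Let n agents have demands d_1, …, d_n > 0 and supply S > 0, and suppose there is a q-times bin packing with k bins: subsets B_1, …, B_k of {1,…,n} such that for each j the sum of d_i over i ∈ B_j is at most S, and every agent belongs to at least q of the sets. Let v_1, …, v_n be finite Borel measures on [0,T] (agents' additive utilities), and suppose P_1, …, P_k is a measurable partition of [0,T] that is a k-consensus division for agents 1, …, n-1, i.e., v_i(P_j) = (1/k)·v_i([0,T]) for every i ∈ {1,…,n-1} and every j ∈ {1,…,k}. Then there exists a bijection σ of {1,…,k} such that the allocation X_i := union of P_{σ(j)} over all bins B_j containing i is feasible and satisfies v_i(X_i) ≥ (q/k)·v_i([0,T]) for every agent i ∈ {1,…,n} (with equality for agents 1, …, n-1 that belong to exactly q bins). -/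
open MeasureTheory Set

open scoped Function

/-!
Whatever the bijection `σ`, an agent for whom the pieces are all worth `1/k` of the cake gets one
such piece per bin containing him. Hence `σ` can be chosen for the benefit of the last agent alone.
His best assignment is at least as good as the average over the `k` cyclic shifts of the pieces;
over all these shifts, each of his bins receives every piece exactly once, so that average is the
fraction (number of his bins) / `k` of the cake.
-/

theorem exists_perm_card_nsmul_sum_le {κ M : Type*} [Fintype κ] [AddCommMonoid M] [LinearOrder M]
    [IsOrderedAddMonoid M] (f : κ → M) (J : Finset κ) :
    ∃ σ : Equiv.Perm κ, J.card • ∑ j, f j ≤ Fintype.card κ • ∑ j ∈ J, f (σ j) := by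
  obtain hκ | hκ := isEmpty_or_nonempty κ
  · exact ⟨1, by simp [Finset.eq_empty_of_isEmpty J]⟩
  obtain ⟨σ, hσ⟩ := Finite.exists_max fun σ : Equiv.Perm κ ↦ ∑ j ∈ J, f (σ j)
  have : NeZero (Fintype.card κ) := ⟨Fintype.card_ne_zero⟩
  let _ : AddCommGroup κ := (Fintype.equivFin κ).addCommGroup
  refine ⟨σ, ?_⟩
  calc J.card • ∑ j, f j = ∑ j ∈ J, ∑ c, f (j + c) := by
        rw [← Finset.sum_const]
        exact Finset.sum_congr rfl fun j _ ↦ (Equiv.sum_comp (Equiv.addLeft j) f).symm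
    _ = ∑ c, ∑ j ∈ J, f (j + c) := Finset.sum_comm
    _ ≤ ∑ _c : κ, ∑ j ∈ J, f (σ j) := Finset.sum_le_sum fun c _ ↦ hσ (Equiv.addRight c)
    _ = Fintype.card κ • ∑ j ∈ J, f (σ j) := by rw [Finset.sum_const, Finset.card_univ]

section BinAllocation

variable {ι κ Ω : Type*}

/-- The allocation obtained from bins `B j` and pieces `P j` of the cake by connecting, throughout
the piece `P j`, exactly the agents in the bin `B j`. An assignment `σ` of pieces to bins other
than the identity is encoded by taking `P ∘ σ` for `P`. -/
def binAllocation (B : κ → Finset ι) (P : κ → Set Ω) (i : ι) : Set Ω :=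
  ⋃ (j) (_ : i ∈ B j), P j

variable {B : κ → Finset ι} {P : κ → Set Ω}

theorem mem_binAllocation_iff_of_mem (hP : Pairwise (Disjoint on P)) {j : κ} {t : Ω}
    (ht : t ∈ P j) {i : ι} : t ∈ binAllocation B P i ↔ i ∈ B j := by
  simp only [binAllocation, mem_iUnion, exists_prop]
  refine ⟨fun ⟨j', hi, ht'⟩ ↦ ?_, fun hi ↦ ⟨j, hi, ht⟩⟩
  rwa [← hP.eq (not_disjoint_iff.2 ⟨t, ht', ht⟩)]

theorem sum_indicator_binAllocation [Fintype ι] {M : Type*} [AddCommMonoid M]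
    (hP : Pairwise (Disjoint on P)) {j : κ} {t : Ω} (ht : t ∈ P j) (d : ι → M) :
    ∑ i, (binAllocation B P i).indicator (fun _ ↦ d i) t = ∑ i ∈ B j, d i := by
  classical
  simp only [indicator_apply, mem_binAllocation_iff_of_mem hP ht, Finset.sum_ite_mem,
    Finset.univ_inter]

variable [Fintype κ] [DecidableEq ι] [MeasurableSpace Ω]

theorem measure_binAllocation (hP : Pairwise (Disjoint on P)) (hPm : ∀ j, MeasurableSet (P j))
    (μ : Measure Ω) (i : ι) : μ (binAllocation B P i) = ∑ j with i ∈ B j, μ (P j) := by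
  rw [← measure_biUnion_finset (fun j _ j' _ h ↦ hP h) fun j _ ↦ hPm j]
  simp [binAllocation]

theorem measure_binAllocation_of_forall_eq (hP : Pairwise (Disjoint on P))
    (hPm : ∀ j, MeasurableSet (P j)) {μ : Measure Ω} {c : ENNReal} (hμ : ∀ j, μ (P j) = c)
    (i : ι) : μ (binAllocation B P i) = (Finset.univ.filter fun j ↦ i ∈ B j).card * c := by
  simp only [measure_binAllocation hP hPm, hμ, Finset.sum_const, nsmul_eq_mul]

theorem exists_perm_le_measure_binAllocation (hP : Pairwise (Disjoint on P))
    (hPm : ∀ j, MeasurableSet (P j)) (μ : Measure Ω) (i : ι) :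
    ∃ σ : Equiv.Perm κ,
      ((Finset.univ.filter fun j ↦ i ∈ B j).card : ENNReal) / Fintype.card κ * μ (⋃ j, P j) ≤
        μ (binAllocation B (P ∘ σ) i) := by
  obtain ⟨σ, hσ⟩ := exists_perm_card_nsmul_sum_le (fun j ↦ μ (P j)) {j | i ∈ B j}
  refine ⟨σ, ?_⟩
  rw [measure_binAllocation (P := P ∘ σ) (hP.comp_of_injective σ.injective) fun j ↦ hPm (σ j),
    measure_iUnion hP hPm, tsum_fintype, ← ENNReal.mul_div_right_comm]
  exact ENNReal.div_le_of_le_mul' (by simpa only [nsmul_eq_mul, Function.comp_apply] using hσ)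

theorem exists_perm_forall_mem_le_measure_binAllocation (hP : Pairwise (Disjoint on P))
    (hPm : ∀ j, MeasurableSet (P j)) (v : ι → Measure Ω) {s : Set ι} (hs : s.Subsingleton) :
    ∃ σ : Equiv.Perm κ, ∀ i ∈ s,
      ((Finset.univ.filter fun j ↦ i ∈ B j).card : ENNReal) / Fintype.card κ * v i (⋃ j, P j) ≤
        v i (binAllocation B (P ∘ σ) i) := by
  obtain rfl | ⟨a, rfl⟩ := hs.eq_empty_or_singleton
  · simp
  · simpa only [mem_singleton_iff, forall_eq] using
      exists_perm_le_measure_binAllocation hP hPm (v a) a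

theorem consensus_division_q_times_bin_packing_general [Fintype ι] {M : Type*} [AddCommMonoid M]
    [LE M] {q : ℕ} {d : ι → M} {S : M} {C : Set Ω} {v : ι → Measure Ω} {A : Set ι}
    (hcap : ∀ j, ∑ i ∈ B j, d i ≤ S)
    (hcov : ∀ i, q ≤ (Finset.univ.filter fun j ↦ i ∈ B j).card)
    (hPm : ∀ j, MeasurableSet (P j)) (hP : Pairwise (Disjoint on P)) (hPC : ⋃ j, P j = C)
    (hA : Aᶜ.Subsingleton)
    (hcons : ∀ i ∈ A, ∀ j, v i (P j) = (Fintype.card κ : ENNReal)⁻¹ * v i C) :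
    ∃ σ : Equiv.Perm κ,
      (∀ t ∈ C, ∑ i, (binAllocation B (P ∘ σ) i).indicator (fun _ ↦ d i) t ≤ S) ∧
      (∀ i, (q : ENNReal) / Fintype.card κ * v i C ≤ v i (binAllocation B (P ∘ σ) i)) ∧
      ∀ i ∈ A, (Finset.univ.filter fun j ↦ i ∈ B j).card = q →
        v i (binAllocation B (P ∘ σ) i) = (q : ENNReal) / Fintype.card κ * v i C := by
  let share (i : ι) : ENNReal :=
    ((Finset.univ.filter fun j ↦ i ∈ B j).card : ENNReal) / Fintype.card κ * v i C
  have hPσ (σ : Equiv.Perm κ) : Pairwise (Disjoint on (P ∘ σ)) :=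
    hP.comp_of_injective σ.injective
  have consensus_share (σ : Equiv.Perm κ) : ∀ i ∈ A, v i (binAllocation B (P ∘ σ) i) = share i := by
    intro i hi
    rw [measure_binAllocation_of_forall_eq (hPσ σ) (fun j ↦ hPm (σ j)) fun j ↦ hcons i hi (σ j),
      ← mul_assoc, ← div_eq_mul_inv]
  obtain ⟨σ, other_share⟩ : ∃ σ : Equiv.Perm κ,
      ∀ i ∈ Aᶜ, share i ≤ v i (binAllocation B (P ∘ σ) i) := by
    simpa only [hPC] using exists_perm_forall_mem_le_measure_binAllocation hP hPm v hA
  refine ⟨σ, fun t ht ↦ ?_, fun i ↦ ?_, fun i hi hq ↦ ?_⟩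
  · rw [← hPC, ← σ.surjective.iUnion_comp] at ht
    obtain ⟨j, hj⟩ := mem_iUnion.1 ht
    exact (sum_indicator_binAllocation (hPσ σ) hj d).trans_le (hcap j)
  · calc (q : ENNReal) / Fintype.card κ * v i C ≤ share i := by
          unfold share
          gcongr
          exact hcov i
      _ ≤ v i (binAllocation B (P ∘ σ) i) := by
          by_cases hi : i ∈ A
          exacts [(consensus_share σ i hi).ge, other_share i hi]
  · rw [consensus_share σ i hi, ← hq]

end BinAllocation

/-- Combining a `q`-times bin packing with `k` bins and a `k`-consensus division
`P 1, …, P k` of `[0,T]` for agents `0, …, n-2`: some bijection `σ` of the bins to the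
pieces yields, via `X i := ⋃ {P (σ j) | i ∈ B j}`, a feasible allocation giving every
agent at least a `q/k` fraction of his total utility, with equality for each of the
agents `0, …, n-2` belonging to exactly `q` bins. -/
theorem consensus_division_q_times_bin_packing
    (n k q : ℕ) (d : Fin n → ℝ) (S T : ℝ)
    (hd : ∀ i, 0 < d i) (hS : 0 < S) (hT : 0 < T)
    (B : Fin k → Finset (Fin n))
    (hcap : ∀ j, ∑ i ∈ B j, d i ≤ S)
    (hcov : ∀ i, q ≤ (Finset.univ.filter fun j => i ∈ B j).card)
    (v : Fin n → Measure ℝ)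
    (hfin : ∀ i, IsFiniteMeasure (v i))
    (P : Fin k → Set ℝ)
    (hPmeas : ∀ j, MeasurableSet (P j))
    (hPdisj : ∀ j j', j ≠ j' → Disjoint (P j) (P j'))
    (hPcover : (⋃ j, P j) = Set.Icc 0 T)
    (hcons : ∀ i : Fin n, (i : ℕ) < n - 1 →
      ∀ j, v i (P j) = ((k : ENNReal))⁻¹ * v i (Set.Icc 0 T)) :
    ∃ σ : Equiv.Perm (Fin k), ∃ X : Fin n → Set ℝ,
      (∀ i, X i = ⋃ j ∈ Finset.univ.filter (fun j => i ∈ B j), P (σ j)) ∧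
      (∀ t ∈ Set.Icc (0 : ℝ) T, ∑ i, (X i).indicator (fun _ => d i) t ≤ S) ∧
      (∀ i, (q : ENNReal) / (k : ENNReal) * v i (Set.Icc 0 T) ≤ v i (X i)) ∧
      (∀ i : Fin n, (i : ℕ) < n - 1 →
        (Finset.univ.filter fun j => i ∈ B j).card = q →
        v i (X i) = (q : ENNReal) / (k : ENNReal) * v i (Set.Icc 0 T)) := by
  have hlast : {i : Fin n | (i : ℕ) < n - 1}ᶜ.Subsingleton := fun i hi j hj ↦ by
    simp only [mem_compl_iff, mem_ofPred_eq] at hi hj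
    omega
  obtain ⟨σ, h⟩ := consensus_division_q_times_bin_packing_general hcap hcov hPmeas hPdisj hPcover
    hlast (by simpa using hcons)
  exact ⟨σ, binAllocation B (P ∘ σ), fun i ↦ by simp [binAllocation], by simpa using h⟩
end
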